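/- arXiv:1504.04069 — 5 statements merged into one kernel-verified Lean document; each statement's English description precedes it below -/
import Mathlib

section
/- Suppose G′ is a finite simple graph that is not a disjoint union of copies of K_2, and G is obtained from G′ by attaching finitely many (possibly empty) trees to its vertices (each attached tree is glued by identifying one of its vertices with a vertex of G′), with at least one attached tree having at least one edge. Then H_G = H_{G′}, H_G^ψ = H_{G′}^ψ, and H_G^φ = H_{G′}^φ. In particular, if G is a tree with at least 3 vertices, then CE_H(G) = CE_H^ψ(G) = CE_H^φ(G) = 1. -/
open Set Matrix

noncomputable section

/-- Entrywise power function `x ↦ x^α` on nonnegative reals, with the convention `0^α := 0`. -/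
def powEnt (α x : ℝ) : ℝ := if x = 0 then 0 else x ^ α

/-- The odd extension `ψ_α(x) = sgn(x)|x|^α` of the power function, with `ψ_α(0) = 0`. -/
def psiF (α x : ℝ) : ℝ := Real.sign x * |x| ^ α

/-- The even extension `φ_α(x) = |x|^α` of the power function, with `φ_α(0) = 0`. -/
def phiF (α x : ℝ) : ℝ := if x = 0 then 0 else |x| ^ α

/-- `P_G(I)`: positive semidefinite matrices with entries in `I` and zeros outside
the edge pattern of `G`. -/
def PsetG {V : Type*} [Fintype V] (G : SimpleGraph V) (I : Set ℝ) :
    Set (Matrix V V ℝ) :=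
  {A | A.PosSemidef ∧ (∀ i j, A i j ∈ I) ∧ ∀ i j, i ≠ j → ¬ G.Adj i j → A i j = 0}

/-- `H_G`: the set of entrywise powers preserving `P_G([0,∞))`. -/
def HsetG {V : Type*} [Fintype V] (G : SimpleGraph V) : Set ℝ :=
  {α | ∀ A ∈ PsetG G (Ici (0 : ℝ)), A.map (powEnt α) ∈ PsetG G univ}

/-- `H_G^ψ`: the set of powers `α` such that `ψ_α` preserves `P_G(ℝ)`. -/
def HsetPsi {V : Type*} [Fintype V] (G : SimpleGraph V) : Set ℝ :=
  {α | ∀ A ∈ PsetG G univ, A.map (psiF α) ∈ PsetG G univ}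

/-- `H_G^φ`: the set of powers `α` such that `φ_α` preserves `P_G(ℝ)`. -/
def HsetPhi {V : Type*} [Fintype V] (G : SimpleGraph V) : Set ℝ :=
  {α | ∀ A ∈ PsetG G univ, A.map (phiF α) ∈ PsetG G univ}

/-- The set of which the critical exponent is the least element:
all `α` such that every `β ≥ α` lies in `H`. -/
def CEset (H : Set ℝ) : Set ℝ := {α | ∀ β, α ≤ β → β ∈ H}

/-- The positive integers, as a set of reals. -/
def posNats : Set ℝ := {x | ∃ k : ℕ, 0 < k ∧ x = k}

/-- The odd positive integers `−1+2ℕ`, as a set of reals. -/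
def oddNats : Set ℝ := {x | ∃ k : ℕ, 0 < k ∧ x = 2 * k - 1}

/-- The even positive integers `2ℕ`, as a set of reals. -/
def evenNats : Set ℝ := {x | ∃ k : ℕ, 0 < k ∧ x = 2 * k}

/-- `f` agrees with `x ↦ x ^ α` on the positive reals, vanishes at `0`, and its modulus is
compatible with squares on the domain `I ⊇ [0, ∞)`. -/
structure IsPowerExtension (α : ℝ) (I : Set ℝ) (f : ℝ → ℝ) : Prop where
  map_zero : f 0 = 0
  map_pos : ∀ x, 0 < x → f x = x ^ α
  map_sq : ∀ x ∈ I, f (x ^ 2) = f x ^ 2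
  nonneg_subset : Ici 0 ⊆ I

lemma isPowerExtension_powEnt (α : ℝ) : IsPowerExtension α (Ici 0) (powEnt α) where
  map_zero := by simp [powEnt]
  map_pos x hx := by simp [powEnt, hx.ne']
  map_sq x hx := by
    rcases eq_or_lt_of_le (show (0 : ℝ) ≤ x from hx) with rfl | h
    · simp [powEnt]
    · simp only [powEnt, h.ne', pow_eq_zero_iff, ne_eq, OfNat.ofNat_ne_zero, not_false_eq_true,
        if_false]
      rw [sq, sq, Real.mul_rpow h.le h.le]
  nonneg_subset := Subset.rfl

lemma isPowerExtension_phiF (α : ℝ) : IsPowerExtension α univ (phiF α) where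
  map_zero := by simp [phiF]
  map_pos x hx := by simp [phiF, hx.ne', abs_of_pos hx]
  map_sq x _ := by
    by_cases h : x = 0
    · simp [phiF, h]
    · simp only [phiF, h, pow_eq_zero_iff, ne_eq, OfNat.ofNat_ne_zero, not_false_eq_true,
        if_false]
      rw [abs_pow, sq, sq, Real.mul_rpow (abs_nonneg _) (abs_nonneg _)]
  nonneg_subset := subset_univ _

lemma isPowerExtension_psiF (α : ℝ) : IsPowerExtension α univ (psiF α) where
  map_zero := by simp [psiF]
  map_pos x hx := by simp [psiF, Real.sign_of_pos hx, abs_of_pos hx]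
  map_sq x _ := by
    by_cases h : x = 0
    · simp [psiF, h]
    · have h2 : 0 < x ^ 2 := by positivity
      have hs : Real.sign x ^ 2 = 1 := by
        rcases Real.sign_apply_eq_of_ne_zero x h with h | h <;> simp [h]
      rw [psiF, psiF, Real.sign_of_pos h2, mul_pow, hs, abs_pow, sq, sq,
        Real.mul_rpow (abs_nonneg _) (abs_nonneg _)]
  nonneg_subset := subset_univ _

namespace IsPowerExtension

variable {α : ℝ} {I : Set ℝ} {f : ℝ → ℝ}

lemma map_nonneg (hf : IsPowerExtension α I f) {x : ℝ} (hx : 0 ≤ x) : 0 ≤ f x := by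
  rcases eq_or_lt_of_le hx with rfl | h
  · exact hf.map_zero.ge
  · rw [hf.map_pos x h]
    positivity

lemma map_eq (hf : IsPowerExtension α I f) (hα : 1 ≤ α) {x : ℝ} (hx : 0 ≤ x) : f x = x ^ α := by
  rcases eq_or_lt_of_le hx with rfl | h
  · rw [hf.map_zero, Real.zero_rpow (by linarith)]
  · exact hf.map_pos x h

/-- Superadditivity of `f`, in the form needed for Schur complements. -/
lemma map_sub_add_le (hf : IsPowerExtension α I f) (hα : 1 ≤ α) {a b c : ℝ} (ha : 0 < a)
    (hb : b ∈ I) (hc : 0 ≤ c - b ^ 2 / a) : f (c - b ^ 2 / a) + f b ^ 2 / f a ≤ f c := by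
  have hq : 0 ≤ b ^ 2 / a := by positivity
  rw [← hf.map_sq b hb, hf.map_eq hα hc, hf.map_eq hα (sq_nonneg b), hf.map_eq hα ha.le,
    hf.map_eq hα (by linarith : 0 ≤ c), ← Real.div_rpow (sq_nonneg b) ha.le]
  simpa using Real.add_rpow_le_rpow_add hc hq hα

end IsPowerExtension

/-- The Schur complement of a diagonal entry, kept at the original size, is positive
semidefinite. -/
lemma Matrix.PosSemidef.sub_vecMulVec_div {V : Type*} [Fintype V] {A : Matrix V V ℝ}
    (hA : A.PosSemidef) {v : V} (hv : 0 < A v v) :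
    (Matrix.of fun i j => A i j - A v i * A v j / A v v).PosSemidef := by
  classical
  have hsymm : ∀ i j, A i j = A j i := fun i j => by simpa using (hA.isHermitian.apply i j).symm
  refine .of_dotProduct_mulVec_nonneg ?_ fun x => ?_
  · ext i j
    simp [hsymm i j, mul_comm (A v i)]
  · set s : ℝ := A v ⬝ᵥ x with hs
    have h := hA.dotProduct_mulVec_nonneg (x - (s / A v v) • Pi.single v 1)
    have hcol : A.col v = A v := funext fun i => hsymm i v
    have hxA : x ⬝ᵥ A v = s := dotProduct_comm _ _
    have hAx : (A *ᵥ x) v = s := rfl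
    have hC : (Matrix.of fun i j => A i j - A v i * A v j / A v v) *ᵥ x
        = A *ᵥ x - (s / A v v) • A v := by
      ext i
      simp only [mulVec, dotProduct, of_apply, Pi.sub_apply, Pi.smul_apply, smul_eq_mul, hs,
        sub_mul, Finset.sum_sub_distrib, Finset.sum_div, Finset.sum_mul]
      congr 1
      exact Finset.sum_congr rfl fun j _ => by ring
    rw [hC]
    simp only [star_trivial, mulVec_sub, mulVec_smul, mulVec_single_one, hcol, sub_dotProduct,
      dotProduct_sub, smul_dotProduct, dotProduct_smul, hxA, single_one_dotProduct, hAx,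
      smul_eq_mul] at h ⊢
    convert h using 1
    field_simp
    ring

section Preserves

variable {V : Type*} [Fintype V] {α : ℝ} {I : Set ℝ} {f : ℝ → ℝ} {G : SimpleGraph V}

/-- `f[-]` preserves positivity on the matrices of `P_G(I)` supported on `S × S`. -/
def PreservesOn (f : ℝ → ℝ) (I : Set ℝ) (G : SimpleGraph V) (S : Set V) : Prop :=
  ∀ A ∈ PsetG G I, (∀ i j, A i j ≠ 0 → i ∈ S ∧ j ∈ S) → (A.map f).PosSemidef

lemma forall_map_mem_PsetG_iff (hf : f 0 = 0) :
    (∀ A ∈ PsetG G I, A.map f ∈ PsetG G univ) ↔ PreservesOn f I G univ := by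
  refine ⟨fun h A hA _ => (h A hA).1, fun h A hA =>
    ⟨h A hA fun _ _ _ => by simp, fun _ _ => mem_univ _, ?_⟩⟩
  intro i j hij hadj
  simp [hA.2.2 i j hij hadj, hf]

/-- Attaching a vertex `v` with a single neighbour `u` in `S`. -/
lemma PreservesOn.insert (hf : IsPowerExtension α I f) (hα : 1 ≤ α) {S : Set V} {u v : V}
    (hS : PreservesOn f I G S) (hu : u ∈ S) (hv : v ∉ S)
    (huniq : ∀ w ∈ S, G.Adj v w → w = u) : PreservesOn f I G (insert v S) := by
  classical
  intro A hA hsupp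
  obtain ⟨hpsd, hI, hpat⟩ := hA
  have hsymm : ∀ i j, A i j = A j i := fun i j => by simpa using (hpsd.isHermitian.apply i j).symm
  have huv : u ≠ v := fun h => hv (h ▸ hu)
  have hrow : ∀ j, j ≠ v → j ≠ u → A v j = 0 := by
    intro j hjv hju
    by_contra h
    have hjS : j ∈ S := ((hsupp v j h).2).resolve_left hjv
    exact h (hpat v j hjv.symm fun hadj => hju (huniq j hjS hadj))
  rcases eq_or_lt_of_le (hpsd.diag_nonneg (i := v)) with h0 | hpos
  · have hvu : A v u = 0 := by
      have hdet := (hpsd.submatrix ![v, u]).det_nonneg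
      simp only [det_fin_two, submatrix_apply, cons_val_zero, cons_val_one, ← h0,
        hsymm u v] at hdet
      nlinarith
    have hv0 : ∀ j, A v j = 0 := by
      intro j
      by_cases hjv : j = v
      · rw [hjv, ← h0]
      by_cases hju : j = u
      · rw [hju, hvu]
      exact hrow j hjv hju
    refine hS A ⟨hpsd, hI, hpat⟩ fun i j hij => ⟨?_, ?_⟩
    · exact (hsupp i j hij).1.resolve_left fun h => hij (h ▸ hv0 j)
    · exact (hsupp i j hij).2.resolve_left fun h => hij (by rw [hsymm i j, h, hv0])
  · set C : Matrix V V ℝ := Matrix.of fun i j => A i j - A v i * A v j / A v v with hC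
    have hCpsd : C.PosSemidef := hpsd.sub_vecMulVec_div hpos
    have hCu : C u u = A u u - A v u ^ 2 / A v v := by simp [hC, sq]
    have hCv : ∀ j, C v j = 0 := fun j => by
      simp only [hC, of_apply]
      field_simp
      ring
    have hCv' : ∀ j, C j v = 0 := fun j => by
      simp only [hC, of_apply, hsymm j v]
      field_simp
      ring
    have hCeq : ∀ i j, i ≠ v → j ≠ v → ¬ (i = u ∧ j = u) → C i j = A i j := by
      intro i j hi hj hij
      by_cases hiu : i = u
      · have hju : j ≠ u := fun h => hij ⟨hiu, h⟩
        simp [hC, hrow j hj hju]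
      · simp [hC, hrow i hi hiu]
    have hCu0 : 0 ≤ C u u := hCpsd.diag_nonneg
    have hzero : (0 : ℝ) ∈ I := hf.nonneg_subset (mem_Ici.2 le_rfl)
    have hCf : (C.map f).PosSemidef := by
      refine hS C ⟨hCpsd, fun i j => ?_, fun i j hij hadj => ?_⟩ fun i j hij => ?_
      · by_cases hi : i = v
        · rwa [hi, hCv]
        by_cases hj : j = v
        · rwa [hj, hCv']
        by_cases hu' : i = u ∧ j = u
        · rw [hu'.1, hu'.2]
          exact hf.nonneg_subset hCu0
        · rw [hCeq i j hi hj hu']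
          exact hI i j
      · by_cases hi : i = v
        · rw [hi, hCv]
        by_cases hj : j = v
        · rw [hj, hCv']
        rw [hCeq i j hi hj fun h => hij (h.1.trans h.2.symm)]
        exact hpat i j hij hadj
      · have hi : i ≠ v := fun h => hij (h ▸ hCv j)
        have hj : j ≠ v := fun h => hij (h ▸ hCv' i)
        by_cases hu' : i = u ∧ j = u
        · exact ⟨hu'.1 ▸ hu, hu'.2 ▸ hu⟩
        · rw [hCeq i j hi hj hu'] at hij
          exact ⟨(hsupp i j hij).1.resolve_left hi, (hsupp i j hij).2.resolve_left hj⟩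
    have hfa : 0 < f (A v v) := by
      rw [hf.map_pos _ hpos]
      positivity
    set e : ℝ := f (A u u) - f (C u u) - f (A v u) ^ 2 / f (A v v) with he
    have he0 : 0 ≤ e := by
      have := hf.map_sub_add_le hα hpos (hI v u) (hCu ▸ hCu0)
      rw [he, hCu]
      linarith
    set w : V → ℝ := Pi.single v (f (A v v)) + Pi.single u (f (A v u)) with hw
    have hdecomp : A.map f = C.map f + (f (A v v))⁻¹ • vecMulVec w (star w)
        + diagonal (Pi.single u e) := by
      ext i j
      simp only [map_apply, Matrix.add_apply, Matrix.smul_apply, vecMulVec_apply, star_trivial,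
        smul_eq_mul, hw, Pi.add_apply, diagonal_apply]
      have hfa' := hfa.ne'
      by_cases hi : i = v
      · subst hi
        by_cases hj : j = i
        · subst hj
          simp [hCv, hf.map_zero, huv.symm, hfa']
        by_cases hju : j = u
        · subst hju
          simp [hCv, hf.map_zero, huv, huv.symm, hfa']
        · simp [hCv, hf.map_zero, huv.symm, hj, hju, Ne.symm hj, hrow j hj hju]
      by_cases hj : j = v
      · subst hj
        by_cases hiu : i = u
        · subst hiu
          simp [hCv', hf.map_zero, huv, huv.symm, hsymm i j]
          field_simp
        · simp [hCv', hf.map_zero, huv, hi, hiu, hsymm i j, hrow i hi hiu]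
      by_cases hu' : i = u ∧ j = u
      · obtain ⟨rfl, rfl⟩ := hu'
        simp [huv, he]
        field_simp
        ring
      · rw [hCeq i j hi hj hu']
        by_cases hiu : i = u
        · have hju : j ≠ u := fun h => hu' ⟨hiu, h⟩
          simp [hj, hju, hiu, Ne.symm hju]
        · simp [hi, hiu]
    rw [hdecomp]
    refine (hCf.add ((posSemidef_vecMulVec_self_star w).smul (inv_nonneg.2 hfa.le))).add
      (.diagonal ?_)
    exact Pi.single_nonneg.2 he0

/-- Edges of `F` with both endpoints in `S`. -/
def restrictTo (F : SimpleGraph V) (S : Set V) : SimpleGraph V where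
  Adj x y := F.Adj x y ∧ x ∈ S ∧ y ∈ S
  symm := ⟨fun _ _ h => ⟨h.1.symm, h.2.2, h.2.1⟩⟩
  loopless := ⟨fun _ h => h.1.ne rfl⟩

/-- Positivity preservation extends from a set `R` of roots along trees attached to `R`. -/
lemma PreservesOn.univ_of_forest (hf : IsPowerExtension α I f) (hα : 1 ≤ α)
    {F : SimpleGraph V} (hforest : F.IsAcyclic) {R : Set V}
    (hFG : ∀ v w, v ∉ R → G.Adj v w → F.Adj v w)
    (hreach : ∀ x, ∃ a ∈ R, F.Reachable x a)
    (huniq : ∀ a ∈ R, ∀ b ∈ R, F.Reachable a b → a = b)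
    (hR : PreservesOn f I G R) : PreservesOn f I G univ := by
  obtain ⟨S, hRS, hS⟩ := Finite.exists_le_maximal
    (p := fun S : Set V => R ⊆ S ∧ PreservesOn f I G S ∧
      ∀ s ∈ S, ∃ a ∈ R, (restrictTo F S).Reachable s a)
    (a := R) ⟨Subset.rfl, hR, fun s hs => ⟨s, hs, .rfl⟩⟩
  obtain ⟨⟨-, hPS, hconn⟩, hmax⟩ := hS
  suffices h : S = univ from h ▸ hPS
  by_contra hne
  obtain ⟨x, hx⟩ := (ne_univ_iff_exists_notMem S).1 hne
  obtain ⟨r, hr, ⟨p⟩⟩ := hreach x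
  obtain ⟨d, -, hd1, hd2⟩ := p.reverse.exists_boundary_dart S (hRS hr) hx
  obtain ⟨⟨u, v⟩, huv⟩ := d
  simp only at hd1 hd2 huv
  have hle : restrictTo F S ≤ F := fun _ _ h => h.1
  have hone : ∀ w ∈ S, G.Adj v w → w = u := by
    intro w hw hvw
    by_contra hwu
    have hFvw : F.Adj v w := hFG v w (fun h => hd2 (hRS h)) hvw
    obtain ⟨a, ha, hua⟩ := hconn u hd1
    obtain ⟨b, hb, hwb⟩ := hconn w hw
    have hab : a = b := huniq a ha b hb <|
      ((hua.mono hle).symm.trans huv.reachable).trans (hFvw.reachable.trans (hwb.mono hle))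
    subst hab
    have hbridge := SimpleGraph.isBridge_iff.1
      (SimpleGraph.isAcyclic_iff_forall_adj_isBridge.1 hforest huv)
    have hle' : restrictTo F S ≤ F.deleteEdges {s(u, v)} := by
      intro y z h
      refine (SimpleGraph.deleteEdges_adj).2 ⟨h.1, fun hyz => ?_⟩
      rcases Sym2.eq_iff.1 (mem_singleton_iff.1 hyz) with ⟨-, rfl⟩ | ⟨rfl, -⟩
      · exact hd2 h.2.2
      · exact hd2 h.2.1
    refine hbridge (((hua.trans hwb.symm).mono hle').trans (SimpleGraph.Adj.reachable ?_))
    refine (SimpleGraph.deleteEdges_adj).2 ⟨hFvw.symm, fun h => ?_⟩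
    rcases Sym2.eq_iff.1 (mem_singleton_iff.1 h) with ⟨h, -⟩ | ⟨h, -⟩
    · exact hwu h
    · exact hd2 (h ▸ hw)
  have hsub : S ⊆ Insert.insert v S := subset_insert v S
  have hmono : restrictTo F S ≤ restrictTo F (Insert.insert v S) :=
    fun _ _ h => ⟨h.1, hsub h.2.1, hsub h.2.2⟩
  refine hd2 (hmax ⟨hRS.trans hsub, hPS.insert hf hα hd1 hd2 hone, ?_⟩ hsub (mem_insert v S))
  rintro s (rfl | hs)
  · obtain ⟨a, ha, hua⟩ := hconn u hd1
    refine ⟨a, ha, SimpleGraph.Reachable.trans (SimpleGraph.Adj.reachable ?_) (hua.mono hmono)⟩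
    exact ⟨huv.symm, mem_insert s S, hsub hd1⟩
  · obtain ⟨a, ha, hsa⟩ := hconn s hs
    exact ⟨a, ha, hsa.mono hmono⟩

/-- A vertex with two distinct neighbours forces every preserving exponent to be at least `1`. -/
lemma one_le_of_preservesOn (hf : IsPowerExtension α I f) {x y z : V} (hxy : G.Adj x y)
    (hxz : G.Adj x z) (hyz : y ≠ z) (h : PreservesOn f I G univ) : 1 ≤ α := by
  classical
  have hxy' := hxy.ne
  have hxz' := hxz.ne
  set w₁ : V → ℝ := Pi.single x 1 + Pi.single y 1 with hw₁
  set w₂ : V → ℝ := Pi.single x 1 + Pi.single z 1 with hw₂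
  have hw₁0 : 0 ≤ w₁ := add_nonneg (Pi.single_nonneg.2 zero_le_one) (Pi.single_nonneg.2 zero_le_one)
  have hw₂0 : 0 ≤ w₂ := add_nonneg (Pi.single_nonneg.2 zero_le_one) (Pi.single_nonneg.2 zero_le_one)
  have hprod : ∀ t, G.Adj x t → ∀ i j, i ≠ j → ¬ G.Adj i j →
      (Pi.single x 1 + Pi.single t 1 : V → ℝ) i *
        (Pi.single x 1 + Pi.single t 1 : V → ℝ) j = 0 := by
    intro t ht i j hij hadj
    simp only [Pi.add_apply, Pi.single_apply]
    have := ht.symm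
    split_ifs <;> simp_all
  have hps := h (vecMulVec w₁ (star w₁) + vecMulVec w₂ (star w₂))
    ⟨(posSemidef_vecMulVec_self_star w₁).add (posSemidef_vecMulVec_self_star w₂),
      fun i j => hf.nonneg_subset <| add_nonneg (mul_nonneg (hw₁0 i) (hw₁0 j))
        (mul_nonneg (hw₂0 i) (hw₂0 j)),
      fun i j hij hadj => by
        simp only [Matrix.add_apply, vecMulVec_apply, star_trivial, hw₁, hw₂,
          hprod y hxy i j hij hadj, hprod z hxz i j hij hadj, add_zero]⟩
    fun _ _ _ => by simp
  have h3 := (hps.submatrix ![x, y, z]).dotProduct_mulVec_nonneg ![1, -1, -1]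
  have h1 : f 1 = 1 := by rw [hf.map_pos 1 one_pos, Real.one_rpow]
  have h2 : f (1 + 1) = 2 ^ α := by rw [one_add_one_eq_two, hf.map_pos 2 two_pos]
  simp [Matrix.mulVec, dotProduct, Fin.sum_univ_three, hw₁, hw₂, vecMulVec_apply, Pi.single_apply,
    hxy', hxz', hyz, hxy'.symm, hxz'.symm, hyz.symm, h1, h2, hf.map_zero] at h3
  have h4 : (2 : ℝ) ^ (1 : ℝ) ≤ 2 ^ α := by
    rw [Real.rpow_one]
    linarith
  exact (Real.rpow_le_rpow_left_iff one_lt_two).1 h4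

end Preserves

/-- Extending by zero blocks preserves positive semidefiniteness. -/
lemma Matrix.PosSemidef.fromBlocks_zero {V W : Type*} [Fintype V] [Fintype W]
    {A : Matrix V V ℝ} (hA : A.PosSemidef) :
    (fromBlocks A 0 0 (0 : Matrix W W ℝ)).PosSemidef := by
  refine .of_dotProduct_mulVec_nonneg (hA.isHermitian.fromBlocks (by simp) (by simp)) fun x => ?_
  have := hA.dotProduct_mulVec_nonneg (x ∘ Sum.inl)
  simpa [fromBlocks_mulVec, dotProduct] using this

section Attach

variable {V W : Type*} [Fintype V] [Fintype W] {α : ℝ} {I : Set ℝ} {f : ℝ → ℝ}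
  {G' : SimpleGraph V} {G : SimpleGraph (V ⊕ W)}

/-- Matrices supported on an induced subgraph are matrices over that subgraph. -/
lemma preservesOn_range_inl_iff (hf : IsPowerExtension α I f)
    (hind : ∀ a b : V, G.Adj (Sum.inl a) (Sum.inl b) ↔ G'.Adj a b) :
    PreservesOn f I G (range Sum.inl) ↔ PreservesOn f I G' univ := by
  have hzero : (0 : ℝ) ∈ I := hf.nonneg_subset (mem_Ici.2 le_rfl)
  constructor
  · intro h A hA _
    have hext := h (fromBlocks A 0 0 0) ⟨hA.1.fromBlocks_zero, ?_, ?_⟩ ?_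
    · exact hext.submatrix Sum.inl
    · rintro (i | i) (j | j)
      exacts [hA.2.1 i j, hzero, hzero, hzero]
    · rintro (i | i) (j | j) hij hadj
      exacts [hA.2.2 i j (fun h => hij (h ▸ rfl)) fun h => hadj ((hind i j).2 h), rfl, rfl, rfl]
    · rintro (i | i) (j | j) hij
      exacts [⟨⟨i, rfl⟩, ⟨j, rfl⟩⟩, absurd rfl hij, absurd rfl hij, absurd rfl hij]
  · intro h A hA hsupp
    have hsub := h (A.submatrix Sum.inl Sum.inl) ⟨hA.1.submatrix _, fun i j => hA.2.1 _ _,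
      fun i j hij hadj => hA.2.2 _ _ (fun h => hij (Sum.inl_injective h))
        fun h => hadj ((hind i j).1 h)⟩ fun _ _ _ => by simp
    convert hsub.fromBlocks_zero (W := W) using 1
    have h0 : ∀ i j, ¬ (i ∈ range (Sum.inl : V → V ⊕ W) ∧ j ∈ range (Sum.inl : V → V ⊕ W)) →
        f (A i j) = 0 := fun i j hij => by
      rw [not_not.1 fun h => hij (hsupp i j h), hf.map_zero]
    ext (i | i) (j | j)
    · rfl
    all_goals exact h0 _ _ (by simp)

lemma preservesOn_attach_forest_iff (hf : IsPowerExtension α I f)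
    (hne : ¬ ∀ ⦃x y z : V⦄, G'.Adj x y → G'.Adj x z → y = z)
    (hind : ∀ a b : V, G.Adj (Sum.inl a) (Sum.inl b) ↔ G'.Adj a b)
    {F : SimpleGraph (V ⊕ W)}
    (hF : ∀ x y, F.Adj x y ↔ (G.Adj x y ∧ ¬ ∃ a b : V, x = Sum.inl a ∧ y = Sum.inl b))
    (hforest : F.IsAcyclic)
    (hcomp : ∀ x : V ⊕ W, ∃! a : V, F.Reachable x (Sum.inl a)) :
    PreservesOn f I G univ ↔ PreservesOn f I G' univ := by
  rw [← preservesOn_range_inl_iff hf hind]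
  refine ⟨fun h A hA _ => h A hA fun _ _ _ => by simp, fun h => ?_⟩
  push Not at hne
  obtain ⟨x, y, z, hxy, hxz, hyz⟩ := hne
  have hα : 1 ≤ α :=
    one_le_of_preservesOn hf hxy hxz hyz ((preservesOn_range_inl_iff hf hind).1 h)
  refine PreservesOn.univ_of_forest hf hα hforest ?_ ?_ ?_ h
  · rintro v w hv hvw
    exact (hF v w).2 ⟨hvw, fun ⟨a, _, ha, _⟩ => hv ⟨a, ha.symm⟩⟩
  · intro x
    obtain ⟨a, ha, -⟩ := hcomp x
    exact ⟨_, ⟨a, rfl⟩, ha⟩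
  · rintro _ ⟨a, rfl⟩ _ ⟨b, rfl⟩ hab
    rw [(hcomp (Sum.inl a)).unique .rfl hab]

end Attach

/-- A connected graph on at least three vertices has a vertex with two distinct neighbours. -/
lemma SimpleGraph.Connected.exists_two_neighbors {U : Type*} [Fintype U] {T : SimpleGraph U}
    (hT : T.Connected) (hcard : 3 ≤ Fintype.card U) :
    ∃ x y z, T.Adj x y ∧ T.Adj x z ∧ y ≠ z := by
  by_contra! h
  obtain ⟨a, b, c, hab, hac, hbc⟩ := Fintype.two_lt_card_iff.1 hcard
  have : Nontrivial U := ⟨a, b, hab⟩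
  obtain ⟨y, hay⟩ := hT.preconnected.exists_adj_of_nontrivial a
  obtain ⟨t, ht⟩ : ∃ t, t ∉ ({a, y} : Set U) := by
    by_cases hb : b = y
    · exact ⟨c, by simp [hac.symm, ← hb, hbc.symm]⟩
    · exact ⟨b, by simp [hab.symm, hb]⟩
  obtain ⟨p⟩ := hT.preconnected a t
  obtain ⟨d, -, hd1, hd2⟩ := p.exists_boundary_dart {a, y} (by simp) ht
  refine hd2 ?_
  rcases hd1 with hd1 | hd1
  · exact Or.inr (h a _ _ (hd1 ▸ d.adj) hay)
  · exact Or.inl (h y _ _ (hd1 ▸ d.adj) hay.symm)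

section Tree

variable {U : Type*} [Fintype U] {T : SimpleGraph U}

lemma preservesOn_tree_iff {α : ℝ} {I : Set ℝ} {f : ℝ → ℝ} (hf : IsPowerExtension α I f)
    (hT : T.Connected) (hacyc : T.IsAcyclic) (hcard : 3 ≤ Fintype.card U) :
    PreservesOn f I T univ ↔ 1 ≤ α := by
  classical
  constructor
  · obtain ⟨x, y, z, hxy, hxz, hyz⟩ := hT.exists_two_neighbors hcard
    exact one_le_of_preservesOn hf hxy hxz hyz
  · intro hα
    obtain ⟨r⟩ := hT.nonempty
    refine PreservesOn.univ_of_forest hf hα hacyc (R := {r}) (fun _ _ _ h => h)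
      (fun x => ⟨r, rfl, hT.preconnected x r⟩) (fun a ha b hb _ => ha.trans hb.symm) ?_
    intro A hA hsupp
    have hdiag : A.map f = diagonal (Pi.single r (f (A r r))) := by
      ext i j
      by_cases h : i = r ∧ j = r
      · simp [h.1, h.2]
      · have h0 : A i j = 0 := not_not.1 fun h0 => h (hsupp i j h0)
        rw [map_apply, h0, hf.map_zero, diagonal_apply]
        split_ifs with hij
        · subst hij
          have hi : i ≠ r := fun hi => h ⟨hi, hi⟩
          simp [hi]
        · rfl
    rw [hdiag]
    exact .diagonal (Pi.single_nonneg.2 (hf.map_nonneg hA.1.diag_nonneg))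

end Tree

lemma isLeast_CEset_one {H : Set ℝ} (hH : ∀ α, α ∈ H ↔ 1 ≤ α) : IsLeast (CEset H) 1 :=
  ⟨fun β hβ => (hH β).2 hβ, fun α hα => (hH α).1 (hα α le_rfl)⟩

lemma mem_HsetG_iff {V : Type*} [Fintype V] {G : SimpleGraph V} {α : ℝ} :
    α ∈ HsetG G ↔ PreservesOn (powEnt α) (Ici 0) G univ :=
  forall_map_mem_PsetG_iff (isPowerExtension_powEnt α).map_zero

lemma mem_HsetPsi_iff {V : Type*} [Fintype V] {G : SimpleGraph V} {α : ℝ} :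
    α ∈ HsetPsi G ↔ PreservesOn (psiF α) univ G univ :=
  forall_map_mem_PsetG_iff (isPowerExtension_psiF α).map_zero

lemma mem_HsetPhi_iff {V : Type*} [Fintype V] {G : SimpleGraph V} {α : ℝ} :
    α ∈ HsetPhi G ↔ PreservesOn (phiF α) univ G univ :=
  forall_map_mem_PsetG_iff (isPowerExtension_phiF α).map_zero

/-- **Theorem 2.2**: if `G` is obtained from `G'` (not a disjoint union of copies of `K_2`,
i.e. some vertex has two distinct neighbors) by attaching finitely many trees to its vertices
(at least one attached tree having an edge), then the `H`-sets of `G` and `G'` coincide.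
Here `G` lives on `V' ⊕ W`, restricts to `G'` on `V'`, and the graph `F` consisting of the
edges of `G` not joining two vertices of `V'` is a forest each of whose connected components
contains exactly one vertex of `V'` (the attachment root of the corresponding trees).
In particular, any tree with at least `3` vertices has all three critical exponents equal
to `1`. -/
theorem Hsets_attach_trees {V' W : Type} [Fintype V'] [Fintype W]
    [DecidableEq V'] [DecidableEq W]
    (G' : SimpleGraph V') (G : SimpleGraph (V' ⊕ W))
    (hne : ¬ ∀ ⦃x y z : V'⦄, G'.Adj x y → G'.Adj x z → y = z)
    (hind : ∀ a b : V', G.Adj (Sum.inl a) (Sum.inl b) ↔ G'.Adj a b)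
    (F : SimpleGraph (V' ⊕ W))
    (hF : ∀ x y, F.Adj x y ↔ (G.Adj x y ∧ ¬ ∃ a b : V', x = Sum.inl a ∧ y = Sum.inl b))
    (hforest : F.IsAcyclic)
    (hcomp : ∀ x : V' ⊕ W, ∃! a : V', F.Reachable x (Sum.inl a))
    (hedge : ∃ x y, F.Adj x y) :
    (HsetG G = HsetG G' ∧ HsetPsi G = HsetPsi G' ∧ HsetPhi G = HsetPhi G') ∧
    (∀ (U : Type) (_ : Fintype U) (T : SimpleGraph U), T.Connected → T.IsAcyclic →
      3 ≤ Fintype.card U →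
      IsLeast (CEset (HsetG T)) 1 ∧ IsLeast (CEset (HsetPsi T)) 1 ∧
      IsLeast (CEset (HsetPhi T)) 1) := by
  refine ⟨⟨?_, ?_, ?_⟩, fun U _ T hT hacyc hcard => ⟨?_, ?_, ?_⟩⟩
  · ext α
    rw [mem_HsetG_iff, mem_HsetG_iff]
    exact preservesOn_attach_forest_iff (isPowerExtension_powEnt α) hne hind hF hforest hcomp
  · ext α
    rw [mem_HsetPsi_iff, mem_HsetPsi_iff]
    exact preservesOn_attach_forest_iff (isPowerExtension_psiF α) hne hind hF hforest hcomp
  · ext α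
    rw [mem_HsetPhi_iff, mem_HsetPhi_iff]
    exact preservesOn_attach_forest_iff (isPowerExtension_phiF α) hne hind hF hforest hcomp
  · exact isLeast_CEset_one fun α => mem_HsetG_iff.trans
      (preservesOn_tree_iff (isPowerExtension_powEnt α) hT hacyc hcard)
  · exact isLeast_CEset_one fun α => mem_HsetPsi_iff.trans
      (preservesOn_tree_iff (isPowerExtension_psiF α) hT hacyc hcard)
  · exact isLeast_CEset_one fun α => mem_HsetPhi_iff.trans
      (preservesOn_tree_iff (isPowerExtension_phiF α) hT hacyc hcard)
end
end

section
/- Let G = (V,E) be a finite simple graph with a decomposition (A,C,B), and let f : ℝ → ℝ with f(0) = 0. If f[−] preserves positivity on P_{G_{A∪C}} and on P_{G_{B∪C}}, and f[−] is Loewner super-additive on P_{G_C}(ℝ), then f[−] preserves positivity on P_G. -/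
open Set Matrix

noncomputable section

/-- A decomposition `(A,C,B)` of a graph `G`: a partition of the vertices such that `C`
separates `A` from `B` (every walk from `A` to `B` meets `C`) and `C` induces a complete
subgraph. -/
def IsDecomposition {V : Type*} (G : SimpleGraph V) (A C B : Set V) : Prop :=
  (∀ v, v ∈ A ∨ v ∈ C ∨ v ∈ B) ∧
  Disjoint A C ∧ Disjoint A B ∧ Disjoint C B ∧
  (∀ a ∈ A, ∀ b ∈ B, ∀ p : G.Walk a b, ∃ c ∈ C, c ∈ p.support) ∧
  (∀ c₁ ∈ C, ∀ c₂ ∈ C, c₁ ≠ c₂ → G.Adj c₁ c₂)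

/-- `P_{G_S}` for a subset `S` of the vertices, identified with full-size matrices by padding
with zeros: positive semidefinite matrices supported on `S × S` whose zero pattern respects
the (induced subgraph of the) graph `G`. -/
def PsetSub {V : Type*} [Fintype V] (G : SimpleGraph V) (S : Set V) :
    Set (Matrix V V ℝ) :=
  {M | M.PosSemidef ∧ (∀ i j, (i ∉ S ∨ j ∉ S) → M i j = 0) ∧
    ∀ i j, i ≠ j → ¬ G.Adj i j → M i j = 0}

/-- A real positive semidefinite matrix is a Gram matrix. -/
theorem Matrix.PosSemidef.exists_eq_gram {V : Type*} [Fintype V] {M : Matrix V V ℝ}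
    (hM : M.PosSemidef) : ∃ (m : ℕ) (v : V → EuclideanSpace ℝ (Fin m)), M = gram ℝ v := by
  obtain ⟨m, u, rfl⟩ := Matrix.posSemidef_iff_eq_sum_vecMulVec.mp hM
  refine ⟨m, fun i => WithLp.toLp 2 fun k => u k i, ?_⟩
  ext i j
  simp [Matrix.sum_apply, vecMulVec_apply, PiLp.inner_apply, mul_comm]

/-- A positive semidefinite matrix whose `A × B` block vanishes is the sum of two positive
semidefinite matrices, one vanishing on the rows and columns of `B`, the other on those of `A`. -/
theorem Matrix.PosSemidef.exists_add_of_block_eq_zero {V : Type*} [Fintype V]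
    {M : Matrix V V ℝ} (hM : M.PosSemidef) {A B : Set V}
    (hAB : ∀ a ∈ A, ∀ b ∈ B, M a b = 0) :
    ∃ M₁ M₂ : Matrix V V ℝ, M₁.PosSemidef ∧ M₂.PosSemidef ∧ M = M₁ + M₂ ∧
      (∀ i j, i ∈ B ∨ j ∈ B → M₁ i j = 0) ∧ (∀ i j, i ∈ A ∨ j ∈ A → M₂ i j = 0) := by
  obtain ⟨m, v, rfl⟩ := hM.exists_eq_gram
  set W : Submodule ℝ (EuclideanSpace ℝ (Fin m)) := Submodule.span ℝ (v '' A) with hW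
  have hB : ∀ b ∈ B, W.starProjection (v b) = 0 := by
    intro b hb
    rw [Submodule.starProjection_apply_eq_zero_iff, hW, Submodule.mem_orthogonal]
    intro u hu
    induction hu using Submodule.span_induction with
    | mem x hx => obtain ⟨a, ha, rfl⟩ := hx; exact hAB a ha b hb
    | zero => simp
    | add x y _ _ hx hy => rw [inner_add_left, hx, hy, add_zero]
    | smul c x _ hx => rw [inner_smul_left, hx, mul_zero]
  have hA : ∀ a ∈ A, v a - W.starProjection (v a) = 0 := fun a ha => by
    rw [sub_eq_zero, eq_comm, Submodule.starProjection_eq_self_iff]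
    exact Submodule.subset_span ⟨a, ha, rfl⟩
  refine ⟨gram ℝ fun i => W.starProjection (v i), gram ℝ fun i => v i - W.starProjection (v i),
    posSemidef_gram ℝ _, posSemidef_gram ℝ _, ?_, ?_, ?_⟩
  · ext i j
    have h₁ := W.starProjection_inner_eq_zero (v i) _ (W.starProjection_apply_mem (v j))
    have h₂ := W.starProjection_inner_eq_zero (v j) _ (W.starProjection_apply_mem (v i))
    rw [real_inner_comm] at h₂
    simp only [Matrix.add_apply, gram_apply, inner_sub_left, inner_sub_right] at h₁ h₂ ⊢
    linarith
  · rintro i j (h | h) <;> simp [hB _ h]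
  · rintro i j (h | h) <;> simp [hA _ h]

/-- Padding the principal block on `C` by zeros preserves positive semidefiniteness. -/
theorem Matrix.PosSemidef.indicator_block {V : Type*} [Fintype V] {M : Matrix V V ℝ}
    (hM : M.PosSemidef) (C : Set V) [DecidablePred (· ∈ C)] :
    (Matrix.of fun i j => if i ∈ C ∧ j ∈ C then M i j else 0).PosSemidef := by
  obtain ⟨m, v, rfl⟩ := hM.exists_eq_gram
  suffices h : (Matrix.of fun i j => if i ∈ C ∧ j ∈ C then gram ℝ v i j else 0) =
      gram ℝ fun i => if i ∈ C then v i else 0 from h ▸ posSemidef_gram ℝ _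
  ext i j
  by_cases hi : i ∈ C <;> by_cases hj : j ∈ C <;> simp [hi, hj]

/-- **Theorem 3.3(1)**: if `(A,C,B)` is a decomposition of `G`, `f(0) = 0`, `f[−]` preserves
positivity on `P_{G_{A∪C}}` and on `P_{G_{B∪C}}`, and `f[−]` is Loewner super-additive on
`P_{G_C}(ℝ)`, then `f[−]` preserves positivity on `P_G`. -/
theorem decomposition_preserves_positivity {V : Type*} [Fintype V] (G : SimpleGraph V)
    (A C B : Set V) (hdec : IsDecomposition G A C B)
    (f : ℝ → ℝ) (hf0 : f 0 = 0)
    (h1 : ∀ M ∈ PsetSub G (A ∪ C), (M.map f).PosSemidef)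
    (h2 : ∀ M ∈ PsetSub G (B ∪ C), (M.map f).PosSemidef)
    (h3 : ∀ M ∈ PsetSub G C, ∀ N ∈ PsetSub G C,
      ((M + N).map f - M.map f - N.map f) ∈ PsetSub G C) :
    ∀ M ∈ PsetG G univ, (M.map f).PosSemidef := by
  classical
  obtain ⟨hcov, hAC, hAB, hCB, hsep, hclique⟩ := hdec
  rintro M ⟨hM, -, hpat⟩
  have hnadj : ∀ a ∈ A, ∀ b ∈ B, ¬ G.Adj a b := by
    intro a ha b hb hadj
    obtain ⟨c, hc, hcs⟩ := hsep a ha b hb hadj.toWalk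
    rcases (by simpa using hcs : c = a ∨ c = b) with rfl | rfl
    · exact hAC.notMem_of_mem_left ha hc
    · exact hCB.notMem_of_mem_left hc hb
  obtain ⟨M₁, M₂, hM₁, hM₂, rfl, hzB, hzA⟩ := hM.exists_add_of_block_eq_zero
    fun a ha b hb => hpat a b (hAB.ne_of_mem ha hb) (hnadj a ha b hb)
  have hpat₁ : ∀ i j, i ≠ j → ¬ G.Adj i j → M₁ i j = 0 := by
    intro i j hij hadj
    have hsum := hpat i j hij hadj
    rw [Matrix.add_apply] at hsum
    rcases hcov i with hi | hi | hi
    · rwa [hzA i j (.inl hi), add_zero] at hsum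
    · rcases hcov j with hj | hj | hj
      · rwa [hzA i j (.inr hj), add_zero] at hsum
      · exact absurd (hclique i hi j hj hij) hadj
      · exact hzB i j (.inr hj)
    · exact hzB i j (.inl hi)
  have hpat₂ : ∀ i j, i ≠ j → ¬ G.Adj i j → M₂ i j = 0 := by
    intro i j hij hadj
    have hsum := hpat i j hij hadj
    rwa [Matrix.add_apply, hpat₁ i j hij hadj, zero_add] at hsum
  have hf₁ := h1 M₁ ⟨hM₁, fun i j h => hzB i j (h.imp
    (fun h => by have := hcov i; simp only [mem_union] at h; tauto)
    (fun h => by have := hcov j; simp only [mem_union] at h; tauto)), hpat₁⟩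
  have hf₂ := h2 M₂ ⟨hM₂, fun i j h => hzA i j (h.imp
    (fun h => by have := hcov i; simp only [mem_union] at h; tauto)
    (fun h => by have := hcov j; simp only [mem_union] at h; tauto)), hpat₂⟩
  have hblock : ∀ N : Matrix V V ℝ, N.PosSemidef →
      (∀ i j, i ≠ j → ¬ G.Adj i j → N i j = 0) →
      (Matrix.of fun i j => if i ∈ C ∧ j ∈ C then N i j else 0) ∈ PsetSub G C := by
    refine fun N hN hNpat => ⟨hN.indicator_block C, fun i j h => ?_, fun i j hij hadj => ?_⟩
    · exact if_neg fun h' => h.elim (· h'.1) (· h'.2)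
    · simp [hNpat i j hij hadj]
  have hsup := (h3 _ (hblock M₁ hM₁ hpat₁) _ (hblock M₂ hM₂ hpat₂)).1
  convert (hf₁.add hf₂).add hsup using 1
  ext i j
  by_cases hC : i ∈ C ∧ j ∈ C
  · simp [hC]
  · have hz : M₁ i j = 0 ∨ M₂ i j = 0 := by
      have := hcov i
      have := hcov j
      have := hzA i j
      have := hzB i j
      tauto
    rcases hz with hz | hz <;> simp [hC, hz, hf0]
end
end

section
/- Let G = (V,E) be a finite simple graph with a decomposition (A,C,B), let α ∈ ℝ, and let f = ψ_α or f = φ_α. If f[−] preserves positivity on P_G, then f[−] is Loewner super-additive on P_{G_{C′}}(ℝ) for every subset C′ ⊆ C for which there exist vertices v_1 ∈ A and v_2 ∈ B adjacent to every vertex of C′. -/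
open Set Matrix

noncomputable section

section

open Finset

/-- `f` is one of the two extensions `ψ_α`, `φ_α` of the power function. -/
def IsPowerFun (α : ℝ) (f : ℝ → ℝ) : Prop := f = psiF α ∨ f = phiF α

namespace IsPowerFun

variable {α : ℝ} {f : ℝ → ℝ}

lemma map_zero (hf : IsPowerFun α f) : f 0 = 0 := by
  rcases hf with rfl | rfl <;> simp [psiF, phiF]

lemma of_pos (hf : IsPowerFun α f) {x : ℝ} (hx : 0 < x) : f x = x ^ α := by
  rcases hf with rfl | rfl
  · simp [psiF, Real.sign_of_pos hx, abs_of_pos hx]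
  · simp [phiF, hx.ne', abs_of_pos hx]

lemma map_one (hf : IsPowerFun α f) : f 1 = 1 := by
  simp [hf.of_pos one_pos]

lemma map_mul (hf : IsPowerFun α f) (x y : ℝ) : f (x * y) = f x * f y := by
  rcases eq_or_ne x 0 with rfl | hx
  · simp [hf.map_zero]
  rcases eq_or_ne y 0 with rfl | hy
  · simp [hf.map_zero]
  rcases hf with rfl | rfl
  · have hs : Real.sign (x * y) = Real.sign x * Real.sign y := by
      rcases hx.lt_or_gt with hx | hx <;> rcases hy.lt_or_gt with hy | hy
      · simp [Real.sign_of_neg, Real.sign_of_pos, hx, hy, mul_pos_of_neg_of_neg]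
      · simp [Real.sign_of_neg, Real.sign_of_pos, hx, hy, mul_neg_of_neg_of_pos]
      · simp [Real.sign_of_neg, Real.sign_of_pos, hx, hy, mul_neg_of_pos_of_neg]
      · simp [Real.sign_of_pos, hx, hy]
    simp only [psiF, hs, abs_mul, Real.mul_rpow (abs_nonneg x) (abs_nonneg y)]
    ring
  · simp [phiF, hx, hy, abs_mul, Real.mul_rpow (abs_nonneg x) (abs_nonneg y)]

lemma nonneg (hf : IsPowerFun α f) {x : ℝ} (hx : 0 ≤ x) : 0 ≤ f x := by
  rcases hx.eq_or_lt with rfl | hx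
  · exact hf.map_zero.ge
  · rw [hf.of_pos hx]
    positivity

lemma mono (hf : IsPowerFun α f) (hα : 0 < α) {x y : ℝ} (hx : 0 ≤ x) (hxy : x ≤ y) :
    f x ≤ f y := by
  rcases hx.eq_or_lt with rfl | hx
  · exact hf.map_zero.trans_le (hf.nonneg hxy)
  · rw [hf.of_pos hx, hf.of_pos (hx.trans_le hxy)]
    exact Real.rpow_le_rpow hx.le hxy hα.le

lemma exists_hasDerivAt (hf : IsPowerFun α f) (hα : 1 < α) :
    ∃ g, IsPowerFun (α - 1) g ∧ ∀ x, HasDerivAt f (α * g x) x := by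
  have key : ∀ x : ℝ, x ≠ 0 → |x| ^ (α - 2) * x = psiF (α - 1) x := by
    intro x hx
    have h1 : |x| ^ (α - 1) = |x| ^ (α - 2) * |x| := by
      rw [← Real.rpow_add_one (abs_ne_zero.2 hx)]
      ring_nf
    rw [psiF, h1]
    rcases hx.lt_or_gt with hx | hx
    · simp [Real.sign_of_neg hx, abs_of_neg hx]
    · simp [Real.sign_of_pos hx, abs_of_pos hx]
  rcases hf with rfl | rfl
  · refine ⟨phiF (α - 1), .inr rfl, fun x => ?_⟩
    rcases lt_trichotomy x 0 with hx | rfl | hx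
    · have h := (hasDerivAt_abs_rpow x hα).neg
      have he : psiF α =ᶠ[nhds x] fun y => -|y| ^ α := by
        filter_upwards [eventually_lt_nhds hx] with y hy
        simp [psiF, Real.sign_of_neg hy]
      refine (h.congr_of_eventuallyEq he).congr_deriv ?_
      rw [mul_assoc, key x hx.ne, psiF, phiF]
      simp [hx.ne, Real.sign_of_neg hx]
    · rw [hasDerivAt_iff_isLittleO_nhds_zero]
      have h := (hasDerivAt_iff_isLittleO_nhds_zero.1 (hasDerivAt_abs_rpow 0 hα)).norm_left
      refine Asymptotics.IsLittleO.of_norm_left (h.congr_left fun y => ?_)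
      have : α ≠ 0 := by positivity
      rcases lt_trichotomy y 0 with hy | rfl | hy
      · simp [psiF, phiF, Real.sign_of_neg hy, this]
      · simp [psiF, phiF, this]
      · simp [psiF, phiF, Real.sign_of_pos hy, this]
    · have h := hasDerivAt_abs_rpow x hα
      have he : psiF α =ᶠ[nhds x] fun y => |y| ^ α := by
        filter_upwards [eventually_gt_nhds hx] with y hy
        simp [psiF, Real.sign_of_pos hy]
      refine (h.congr_of_eventuallyEq he).congr_deriv ?_
      rw [mul_assoc, key x hx.ne', psiF, phiF]
      simp [hx.ne', Real.sign_of_pos hx]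
  · refine ⟨psiF (α - 1), .inl rfl, fun x => ?_⟩
    have he : phiF α = fun y => |y| ^ α := by
      funext y
      rcases eq_or_ne y 0 with rfl | hy
      · have : α ≠ 0 := by positivity
        simp [phiF, this]
      · simp [phiF, hy]
    rw [he]
    refine (hasDerivAt_abs_rpow x hα).congr_deriv ?_
    rcases eq_or_ne x 0 with rfl | hx
    · simp [psiF]
    · rw [mul_assoc, key x hx]

end IsPowerFun

variable {V : Type*} [Fintype V]

/-- The quadratic form of the matrix `K`. -/
def quadForm (K : Matrix V V ℝ) (w : V → ℝ) : ℝ := ∑ i, ∑ j, w i * w j * K i j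

lemma quadForm_eq_dotProduct (K : Matrix V V ℝ) (w : V → ℝ) :
    quadForm K w = star w ⬝ᵥ (K *ᵥ w) := by
  simp only [quadForm, dotProduct, mulVec, star_trivial, Finset.mul_sum]
  exact sum_congr rfl fun i _ => sum_congr rfl fun j _ => by ring

lemma posSemidef_iff_quadForm {K : Matrix V V ℝ} :
    K.PosSemidef ↔ K.IsHermitian ∧ ∀ w, 0 ≤ quadForm K w := by
  simp only [posSemidef_iff_dotProduct_mulVec, quadForm_eq_dotProduct]

lemma quadForm_sub (K L : Matrix V V ℝ) (w : V → ℝ) :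
    quadForm (K - L) w = quadForm K w - quadForm L w := by
  simp only [quadForm, Matrix.sub_apply, mul_sub, sum_sub_distrib]

lemma quadForm_vecMulVec (z w : V → ℝ) :
    quadForm (vecMulVec z z) w = (∑ i, w i * z i) ^ 2 := by
  simp only [quadForm, vecMulVec_apply, sq, sum_mul_sum]
  exact sum_congr rfl fun i _ => sum_congr rfl fun j _ => by ring

lemma posSemidef_vecMulVec_self (z : V → ℝ) : (vecMulVec z z).PosSemidef := by
  simpa using posSemidef_vecMulVec_self_star z

lemma isHermitian_map {V : Type*} {K : Matrix V V ℝ} (hK : K.PosSemidef) (f : ℝ → ℝ) :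
    (K.map f).IsHermitian := by
  ext i j
  simpa using congrArg f (hK.1.apply i j)

lemma quadForm_single_add [DecidableEq V] {K : Matrix V V ℝ} (hK : K.IsHermitian) (w : V → ℝ)
    (k : V) (c : ℝ) :
    quadForm K (w + Pi.single k c) =
      quadForm K w + 2 * c * ∑ i, w i * K i k + c ^ 2 * K k k := by
  have hs : ∀ i, K k i = K i k := fun i => by simpa using hK.apply i k
  simp only [quadForm, Pi.add_apply, add_mul, mul_add, sum_add_distrib, Pi.single_apply,
    ite_mul, zero_mul, mul_ite, mul_zero, sum_ite_eq', sum_const_zero,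
    Finset.mem_univ, if_true, sum_ite_irrel, hs, Finset.mul_sum]
  have h1 : ∀ i, 2 * c * (w i * K i k) = w i * c * K i k + c * w i * K i k := fun i => by ring
  simp only [h1, sum_add_distrib]
  ring

/-- Schur product with a matrix which is positive on vectors supported in `t` only. -/
lemma quadForm_hadamard_nonneg {B K : Matrix V V ℝ} (hB : B.PosSemidef) {t : Finset V}
    (hK : ∀ w : V → ℝ, (∀ i ∉ t, w i = 0) → 0 ≤ quadForm K w) (w : V → ℝ)
    (hw : ∀ i ∉ t, w i = 0 ∨ B i i = 0) : 0 ≤ quadForm (B ⊙ K) w := by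
  obtain ⟨m, b, hb⟩ := Matrix.posSemidef_iff_eq_sum_vecMulVec.1 hB
  have hent : ∀ i j, B i j = ∑ l, b l i * b l j := by
    intro i j
    rw [hb, Matrix.sum_apply]
    simp [vecMulVec_apply]
  have hq : quadForm (B ⊙ K) w = ∑ l, quadForm K fun i => w i * b l i := by
    simp only [quadForm, hadamard_apply, hent, Finset.sum_mul, Finset.mul_sum]
    conv_rhs => rw [Finset.sum_comm]
    refine sum_congr rfl fun i _ => ?_
    rw [Finset.sum_comm]
    exact sum_congr rfl fun l _ => sum_congr rfl fun j _ => by ring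
  rw [hq]
  refine sum_nonneg fun l _ => hK _ fun i hi => ?_
  rcases hw i hi with h | h
  · simp [h]
  · have : b l i = 0 := by
      rw [hent, sum_eq_zero_iff_of_nonneg fun _ _ => mul_self_nonneg _] at h
      exact mul_self_eq_zero.1 (h l (Finset.mem_univ l))
    simp [this]

/-- Splitting off a rank-one matrix which agrees with `A` in the row and column of `k`. -/
lemma exists_rankOne_reduction {A : Matrix V V ℝ} (hA : A.PosSemidef) (k : V) :
    ∃ z : V → ℝ, (A - vecMulVec z z).PosSemidef ∧ (A - vecMulVec z z) k k = 0 := by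
  classical
  have hq := (posSemidef_iff_quadForm.1 hA).2
  have hkk : 0 ≤ A k k := hA.diag_nonneg
  rcases hkk.eq_or_lt with h0 | hpos
  · refine ⟨0, by simpa using hA, by simp [← h0]⟩
  have hs : √(A k k) * √(A k k) = A k k := Real.mul_self_sqrt hkk
  have hs0 : √(A k k) ≠ 0 := (Real.sqrt_pos.2 hpos).ne'
  refine ⟨fun i => A i k / √(A k k), ?_, ?_⟩
  · refine posSemidef_iff_quadForm.2 ⟨hA.1.sub (posSemidef_vecMulVec_self _).1, fun w => ?_⟩
    rw [quadForm_sub, quadForm_vecMulVec]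
    have hsum : ∑ i, w i * (A i k / √(A k k)) = (∑ i, w i * A i k) / √(A k k) := by
      rw [Finset.sum_div]
      exact sum_congr rfl fun i _ => by ring
    have h := hq (w + Pi.single k (-(∑ i, w i * A i k) / A k k))
    rw [quadForm_single_add hA.1] at h
    rw [hsum, div_pow, sq √(A k k), hs]
    convert h using 1
    field_simp
    ring
  · simp only [Matrix.sub_apply, vecMulVec_apply]
    field_simp
    rw [sq, hs]
    ring

lemma quadForm_eq_sum_of_support (K : Matrix V V ℝ) {w : V → ℝ} {s : Finset V}
    (hw : ∀ i ∉ s, w i = 0) : quadForm K w = ∑ i ∈ s, ∑ j ∈ s, w i * w j * K i j := by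
  classical
  rw [quadForm]
  symm
  refine Finset.sum_subset_zero_on_sdiff (Finset.subset_univ s) (fun i hi => ?_) fun i _ => ?_
  · simp [hw i (Finset.mem_sdiff.1 hi).2]
  · refine Finset.sum_subset_zero_on_sdiff (Finset.subset_univ s) (fun j hj => ?_) fun _ _ => rfl
    simp [hw j (Finset.mem_sdiff.1 hj).2]

lemma hasDerivAt_quadForm_map {f g : ℝ → ℝ} {α : ℝ} (hfg : ∀ x, HasDerivAt f (α * g x) x)
    (A B : Matrix V V ℝ) (w : V → ℝ) (t : ℝ) :
    HasDerivAt (fun t : ℝ => quadForm ((A + t • B).map f) w)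
      (α * quadForm (B ⊙ (A + t • B).map g) w) t := by
  have h : ∀ i j, HasDerivAt (fun t : ℝ => w i * w j * f (A i j + t * B i j))
      (w i * w j * (α * g (A i j + t * B i j) * B i j)) t := by
    intro i j
    have h1 : HasDerivAt (fun t : ℝ => A i j + t * B i j) (B i j) t := by
      simpa using ((hasDerivAt_id t).mul_const (B i j)).const_add (A i j)
    exact ((hfg _).comp t h1).const_mul _
  have h2 := HasDerivAt.fun_sum fun i (_ : i ∈ (Finset.univ : Finset V)) =>
    HasDerivAt.fun_sum fun j (_ : j ∈ (Finset.univ : Finset V)) => h i j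
  refine h2.congr_deriv ?_
  simp only [quadForm, hadamard_apply, Matrix.map_apply, Matrix.add_apply, Matrix.smul_apply,
    smul_eq_mul, Finset.mul_sum]
  exact sum_congr rfl fun i _ => sum_congr rfl fun j _ => by ring

lemma le_of_hasDerivAt_nonneg {h h' : ℝ → ℝ} (hd : ∀ t, HasDerivAt h (h' t) t)
    (h0 : ∀ t, 0 ≤ t → t ≤ 1 → 0 ≤ h' t) : h 0 ≤ h 1 := by
  refine monotoneOn_of_deriv_nonneg (convex_Icc (0 : ℝ) 1)
    (fun t _ => (hd t).continuousAt.continuousWithinAt)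
    (fun t _ => (hd t).differentiableAt.differentiableWithinAt) (fun t ht => ?_)
    (by simp) (by simp) zero_le_one
  rw [interior_Icc] at ht
  rw [(hd t).deriv]
  exact h0 t ht.1.le ht.2.le

/-- Powers `α > n - 2` preserve positivity on matrices of size `n`. -/
lemma IsPowerFun.quadForm_map_nonneg {α : ℝ} {f : ℝ → ℝ} (hf : IsPowerFun α f) {s : Finset V}
    (hα : (s.card : ℝ) - 2 < α) {A : Matrix V V ℝ} (hA : A.PosSemidef) {w : V → ℝ}
    (hw : ∀ i ∉ s, w i = 0) : 0 ≤ quadForm (A.map f) w := by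
  classical
  obtain ⟨n, hn⟩ : ∃ n, s.card = n := ⟨_, rfl⟩
  induction n generalizing α f s A w with
  | zero =>
    rw [quadForm_eq_sum_of_support _ hw, Finset.card_eq_zero.1 hn]
    simp
  | succ n ih =>
    rcases n with _ | _ | n
    · obtain ⟨a, rfl⟩ := Finset.card_eq_one.1 hn
      rw [quadForm_eq_sum_of_support _ hw]
      simpa using mul_nonneg (mul_self_nonneg (w a)) (hf.nonneg hA.diag_nonneg)
    · obtain ⟨a, b, hab, rfl⟩ := Finset.card_eq_two.1 hn
      have hα0 : 0 < α := by simpa [hn] using hα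
      have hba : A b a = A a b := by simpa using hA.1.apply a b
      have hdet : A a b * A a b ≤ A a a * A b b := by
        have h := (hA.submatrix ![a, b]).det_nonneg
        rw [Matrix.det_fin_two] at h
        simpa [hba] using h
      have hf1 : f (A a b) * f (A a b) ≤ f (A a a) * f (A b b) := by
        rw [← hf.map_mul, ← hf.map_mul]
        exact hf.mono hα0 (mul_self_nonneg _) hdet
      have haa : 0 ≤ f (A a a) := hf.nonneg hA.diag_nonneg
      have hbb : 0 ≤ f (A b b) := hf.nonneg hA.diag_nonneg
      rw [quadForm_eq_sum_of_support _ hw, Finset.sum_pair hab, Finset.sum_pair hab,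
        Finset.sum_pair hab]
      simp only [Matrix.map_apply, hba]
      rcases haa.eq_or_lt with h0 | hpos
      · have hab0 : f (A a b) = 0 := by
          rw [← h0, zero_mul] at hf1
          exact mul_self_eq_zero.1 (le_antisymm hf1 (mul_self_nonneg _))
        rw [hab0, ← h0]
        nlinarith [mul_nonneg (mul_self_nonneg (w b)) hbb]
      · refine nonneg_of_mul_nonneg_right (a := f (A a a)) ?_ hpos
        nlinarith [sq_nonneg (w a * f (A a a) + w b * f (A a b)),
          mul_nonneg (mul_self_nonneg (w b)) (sub_nonneg.2 hf1)]
    · have hα1 : 1 < α := by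
        rw [hn] at hα
        push_cast at hα
        linarith [(Nat.cast_nonneg n : (0 : ℝ) ≤ n)]
      obtain ⟨k, hk⟩ : s.Nonempty := Finset.card_pos.1 (by omega)
      obtain ⟨z, hB, hBk⟩ := exists_rankOne_reduction hA k
      obtain ⟨g, hg, hd⟩ := hf.exists_hasDerivAt hα1
      set B := A - vecMulVec z z with hBdef
      have hcard : (s.erase k).card = n + 1 + 1 := by rw [Finset.card_erase_of_mem hk]; omega
      have hle := le_of_hasDerivAt_nonneg (hasDerivAt_quadForm_map hd (vecMulVec z z) B w)
        fun t ht _ => by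
          refine mul_nonneg (by linarith) (quadForm_hadamard_nonneg (t := s.erase k) hB
            (fun w' hw' => ih hg ?_ ((posSemidef_vecMulVec_self z).add (hB.smul ht)) hw' hcard)
            w fun i hi => ?_)
          · rw [hcard]
            rw [hn] at hα
            push_cast at hα ⊢
            linarith
          · by_cases hik : i = k
            · exact .inr (hik ▸ hBk)
            · exact .inl (hw i fun his => hi (Finset.mem_erase.2 ⟨hik, his⟩))
      have h0 : (vecMulVec z z).map f = vecMulVec (fun i => f (z i)) fun i => f (z i) := by
        ext i j
        simp [vecMulVec_apply, hf.map_mul]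
      have h1 : vecMulVec z z + (1 : ℝ) • B = A := by simp [hBdef]
      rw [h1, zero_smul, add_zero, h0, quadForm_vecMulVec] at hle
      exact (sq_nonneg _).trans hle

/-- Powers `α > n - 1` are monotone on matrices of size `n`. -/
lemma IsPowerFun.quadForm_map_mono {α : ℝ} {f : ℝ → ℝ} (hf : IsPowerFun α f) {s : Finset V}
    (hα : (s.card : ℝ) - 1 < α) {M N : Matrix V V ℝ} (hM : M.PosSemidef) (hN : N.PosSemidef)
    {w : V → ℝ} (hw : ∀ i ∉ s, w i = 0) :
    quadForm (M.map f) w ≤ quadForm ((M + N).map f) w := by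
  rcases Nat.lt_or_ge s.card 2 with hs | hs
  · rw [quadForm_eq_sum_of_support _ hw, quadForm_eq_sum_of_support _ hw]
    rcases s.eq_empty_or_nonempty with rfl | hne
    · simp
    obtain ⟨a, rfl⟩ := Finset.card_eq_one.1 (by have := hne.card_pos; omega : s.card = 1)
    have hα0 : 0 < α := by simpa using hα
    have hle : f (M a a) ≤ f (M a a + N a a) :=
      hf.mono hα0 hM.diag_nonneg (by linarith [hN.diag_nonneg (i := a)])
    simpa using mul_le_mul_of_nonneg_left hle (mul_self_nonneg (w a))
  · have hs' : (2 : ℝ) ≤ s.card := by exact_mod_cast hs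
    obtain ⟨g, hg, hd⟩ := hf.exists_hasDerivAt (by linarith)
    simpa using le_of_hasDerivAt_nonneg (hasDerivAt_quadForm_map hd M N w) fun t ht _ =>
      mul_nonneg (by linarith) (quadForm_hadamard_nonneg (t := s) hN
        (fun w' hw' => hg.quadForm_map_nonneg (by linarith) (hM.add (hN.smul ht)) hw')
        w fun i hi => .inl (hw i hi))

/-- Powers `α > n` are super-additive on matrices of size `n`. -/
lemma IsPowerFun.quadForm_map_superadditive_of_lt {α : ℝ} {f : ℝ → ℝ} (hf : IsPowerFun α f)
    {s : Finset V} (hα : (s.card : ℝ) < α) {M N : Matrix V V ℝ} (hM : M.PosSemidef)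
    (hN : N.PosSemidef) {w : V → ℝ} (hw : ∀ i ∉ s, w i = 0) :
    0 ≤ quadForm ((M + N).map f - M.map f - N.map f) w := by
  rcases s.eq_empty_or_nonempty with rfl | hne
  · rw [quadForm_eq_sum_of_support _ hw]
    simp
  have hs' : (1 : ℝ) ≤ s.card := by exact_mod_cast hne.card_pos
  obtain ⟨g, hg, hd⟩ := hf.exists_hasDerivAt (by linarith)
  have hle := le_of_hasDerivAt_nonneg (fun t =>
      (hasDerivAt_quadForm_map hd M N w t).sub (hasDerivAt_quadForm_map hd 0 N w t))
    fun t ht _ => by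
      rw [← mul_sub, ← quadForm_sub]
      have hsub : N ⊙ (M + t • N).map g - N ⊙ (0 + t • N).map g =
          N ⊙ ((t • N + M).map g - (t • N).map g) := by
        ext i j
        simp [mul_sub, add_comm]
      rw [hsub]
      refine mul_nonneg (by linarith) (quadForm_hadamard_nonneg (t := s) hN
        (fun w' hw' => ?_) w fun i hi => .inl (hw i hi))
      rw [quadForm_sub, sub_nonneg]
      exact hg.quadForm_map_mono (by linarith) (hN.smul ht) hM hw'
  have h0 : quadForm ((0 : Matrix V V ℝ).map f) w = 0 := by simp [quadForm, hf.map_zero]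
  simp only [Pi.sub_apply, zero_smul, add_zero, one_smul, zero_add, h0, sub_zero] at hle
  rw [quadForm_sub, quadForm_sub]
  linarith

/-- Powers `α ≥ n` are super-additive on matrices of size `n`. -/
lemma IsPowerFun.quadForm_map_superadditive {α : ℝ} {f : ℝ → ℝ} (hf : IsPowerFun α f)
    {s : Finset V} (hα : (s.card : ℝ) ≤ α) {M N : Matrix V V ℝ} (hM : M.PosSemidef)
    (hN : N.PosSemidef) {w : V → ℝ} (hw : ∀ i ∉ s, w i = 0) :
    0 ≤ quadForm ((M + N).map f - M.map f - N.map f) w := by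
  obtain ⟨F, hF, rfl, hc⟩ : ∃ F : ℝ → ℝ → ℝ, (∀ β, IsPowerFun β (F β)) ∧ F α = f ∧
      ∀ x, Continuous fun β => F β x := by
    have hcont : ∀ x : ℝ, x ≠ 0 → Continuous fun β : ℝ => |x| ^ β := fun x hx =>
      Real.continuous_const_rpow (abs_ne_zero.2 hx)
    rcases hf with rfl | rfl
    · refine ⟨psiF, fun β => .inl rfl, rfl, fun x => ?_⟩
      rcases eq_or_ne x 0 with rfl | hx
      · simpa [psiF] using continuous_const
      · exact continuous_const.mul (hcont x hx)
    · refine ⟨phiF, fun β => .inr rfl, rfl, fun x => ?_⟩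
      rcases eq_or_ne x 0 with rfl | hx
      · simpa [phiF] using continuous_const
      · simpa [phiF, hx] using hcont x hx
  have hQ : Continuous fun β =>
      quadForm ((M + N).map (F β) - M.map (F β) - N.map (F β)) w := by
    simp only [quadForm, Matrix.sub_apply, Matrix.map_apply]
    exact continuous_finsetSum _ fun i _ => continuous_finsetSum _ fun j _ =>
      continuous_const.mul (((hc _).sub (hc _)).sub (hc _))
  refine ge_of_tendsto (hQ.continuousAt.tendsto.mono_left (nhdsWithin_le_nhds (s := Ioi α))) ?_
  filter_upwards [self_mem_nhdsWithin] with β hβ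
  exact (hF β).quadForm_map_superadditive_of_lt (lt_of_le_of_lt hα hβ) hM hN hw

/-- Positive integer powers are super-additive. -/
lemma posSemidef_pow_superadditive {V : Type*} {M N : Matrix V V ℝ} (hM : M.PosSemidef)
    (hN : N.PosSemidef) (k : ℕ) :
    (M.map (· ^ (k + 1))).PosSemidef ∧ (N.map (· ^ (k + 1))).PosSemidef ∧
      ((M + N).map (· ^ (k + 1)) - M.map (· ^ (k + 1)) - N.map (· ^ (k + 1))).PosSemidef := by
  induction k with
  | zero =>
    refine ⟨by simpa using hM, by simpa using hN, ?_⟩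
    convert PosSemidef.zero (n := V) (R := ℝ) using 1
    ext i j
    simp
  | succ k ih =>
    obtain ⟨h1, h2, h3⟩ := ih
    refine ⟨?_, ?_, ?_⟩
    · have h : M.map (· ^ (k + 1 + 1)) = M ⊙ M.map (· ^ (k + 1)) := by
        ext i j
        simp [pow_succ']
      exact h ▸ hM.hadamard h1
    · have h : N.map (· ^ (k + 1 + 1)) = N ⊙ N.map (· ^ (k + 1)) := by
        ext i j
        simp [pow_succ']
      exact h ▸ hN.hadamard h2
    · have h : (M + N).map (· ^ (k + 1 + 1)) - M.map (· ^ (k + 1 + 1)) -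
          N.map (· ^ (k + 1 + 1)) =
          (M + N) ⊙ ((M + N).map (· ^ (k + 1)) - M.map (· ^ (k + 1)) - N.map (· ^ (k + 1))) +
            M ⊙ N.map (· ^ (k + 1)) + N ⊙ M.map (· ^ (k + 1)) := by
        ext i j
        simp only [Matrix.sub_apply, Matrix.add_apply, Matrix.map_apply, hadamard_apply]
        ring
      exact h ▸ (((hM.add hN).hadamard h3).add (hM.hadamard h2)).add (hN.hadamard h1)

open Polynomial in
lemma IsPowerFun.eq_pow_of_eval_eq {α : ℝ} {f : ℝ → ℝ} (hf : IsPowerFun α f) (p : ℝ[X])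
    (hp : ∀ x, p.eval x = f x) : ∃ k : ℕ, α = k ∧ ∀ x, f x = x ^ k := by
  have hp0 : p ≠ 0 := by
    rintro rfl
    simpa [hf.map_one] using hp 1
  have hcomp : p.comp (C 2 * X) = C ((2 : ℝ) ^ α) * p := by
    refine Polynomial.funext fun x => ?_
    simp [hp, hf.map_mul, hf.of_pos two_pos]
  have hcoeff : ∀ n, p.coeff n ≠ 0 → α = n := by
    intro n hn
    have h := congrArg (fun q => q.coeff n) hcomp
    simp only [comp_C_mul_X_coeff, coeff_C_mul] at h
    replace h := mul_right_cancel₀ hn ((mul_comm _ _).trans h)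
    rw [← Real.rpow_natCast] at h
    exact ((Real.rpow_right_inj two_pos (by norm_num)).1 h).symm
  have hk : α = p.natDegree := hcoeff _ (leadingCoeff_ne_zero.2 hp0)
  refine ⟨p.natDegree, hk, fun x => ?_⟩
  have hmon : p = monomial p.natDegree (p.coeff p.natDegree) := by
    ext n
    rw [coeff_monomial]
    split_ifs with h
    · rw [h]
    · by_contra hn
      exact h (by exact_mod_cast hk.symm.trans (hcoeff n hn))
  have heval : ∀ y, f y = p.coeff p.natDegree * y ^ p.natDegree := fun y => by
    rw [← hp]
    conv_lhs => rw [hmon, eval_monomial]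
  have h1 := heval 1
  rw [hf.map_one, one_pow, mul_one] at h1
  rw [heval, ← h1, one_mul]

open Polynomial in
/-- A function which is not a polynomial is separated from the monomials of degree `1, …, m` by
a functional supported at `m + 1` points. -/
lemma exists_moments_eq_zero {f : ℝ → ℝ} (hf : ∀ p : ℝ[X], ∃ x, p.eval x ≠ f x) {s : Finset V}
    {m : ℕ} (hm : m + 1 ≤ s.card) : ∃ v w : V → ℝ, (∀ i ∉ s, v i = 0) ∧ (∀ i ∉ s, w i = 0) ∧
      (∀ k, 1 ≤ k → k ≤ m → ∑ i, w i * v i ^ k = 0) ∧ ∑ i, w i * f (v i) ≠ 0 := by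
  classical
  obtain ⟨s', hs', hcard'⟩ := Finset.exists_subset_card_eq hm
  obtain ⟨a, t, hat, rfl, hcard⟩ := Finset.card_eq_succ.1 hcard'
  let e : V → ℝ := fun i => (Fintype.equivFin V i : ℕ) + 1
  have he0 : ∀ i, e i ≠ 0 := fun i => Nat.cast_add_one_ne_zero _
  have hinj : Function.Injective e := fun i j hij => by
    simpa [e, Fin.val_inj] using hij
  obtain ⟨x, hx⟩ := hf (X * Lagrange.interpolate t e fun i => f (e i) / e i)
  let v : V → ℝ := fun i => if i ∈ t then e i else if i = a then x else 0
  let w : V → ℝ := fun i =>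
    if i ∈ t then x * (Lagrange.basis t e i).eval x / e i else if i = a then -1 else 0
  have hsum : ∀ F : ℝ → ℝ, ∑ i, w i * F (v i) =
      x * (Lagrange.interpolate t e fun i => F (e i) / e i).eval x - F x := by
    intro F
    have hsub : ∑ i, w i * F (v i) = ∑ i ∈ insert a t, w i * F (v i) := by
      symm
      refine Finset.sum_subset (Finset.subset_univ _) fun i _ hi => ?_
      simp only [Finset.mem_insert, not_or] at hi
      simp [w, hi.1, hi.2]
    have hat' : ∑ i ∈ t, w i * F (v i) =
        ∑ i ∈ t, x * (F (e i) / e i * (Lagrange.basis t e i).eval x) :=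
      sum_congr rfl fun i hi => by
        simp only [w, v, hi, if_true]
        ring
    rw [hsub, Finset.sum_insert hat, hat', Lagrange.interpolate_apply, eval_finsetSum,
      Finset.mul_sum]
    simp only [w, v, hat, if_false, if_true, eval_mul, eval_C]
    ring
  refine ⟨v, w, fun i hi => ?_, fun i hi => ?_, fun k hk1 hkm => ?_, ?_⟩
  · have h : i ∉ insert a t := fun h => hi (hs' h)
    simp only [Finset.mem_insert, not_or] at h
    simp [v, h.1, h.2]
  · have h : i ∉ insert a t := fun h => hi (hs' h)
    simp only [Finset.mem_insert, not_or] at h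
    simp [w, h.1, h.2]
  · obtain ⟨l, rfl⟩ : ∃ l, k = l + 1 := ⟨k - 1, by omega⟩
    rw [hsum fun y => y ^ (l + 1)]
    have hX : (X ^ l : ℝ[X]) = Lagrange.interpolate t e fun i => e i ^ (l + 1) / e i := by
      refine Lagrange.eq_interpolate_of_eval_eq _ hinj.injOn ?_ fun i _ => ?_
      · rw [degree_X_pow, hcard]
        exact_mod_cast hkm
      · rw [eval_pow, eval_X, pow_succ, mul_div_cancel_right₀ _ (he0 i)]
    rw [← hX, eval_pow, eval_X]
    ring
  · rw [hsum f, sub_ne_zero]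
    simpa using hx

lemma exists_one_add_rpow_taylor (α : ℝ) (m : ℕ) : ∃ c : ℕ → ℝ, c 0 = 1 ∧
    (fun x : ℝ => (1 + x) ^ α - ∑ k ∈ range (m + 1), c k * x ^ k) =O[nhds 0]
      fun x => x ^ (m + 1) := by
  refine ⟨fun k => Ring.choose α k, by simp, ?_⟩
  have h := Real.one_add_rpow_hasFPowerSeriesAt_zero (a := α).isBigO_sub_partialSum_pow (m + 1)
  have h2 := h.trans (Asymptotics.isBigO_of_le (nhds (0 : ℝ)) (g := fun x : ℝ => x ^ (m + 1))
    fun x => by simp)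
  refine h2.congr_left fun x => ?_
  simp only [FormalMultilinearSeries.partialSum, binomialSeries_apply, zero_add, List.ofFn_const,
    List.prod_replicate, smul_eq_mul]

/-- Super-additivity on rank-one matrices forces `∑ wᵢ f(vᵢ) = 0` as soon as the moments of `w`
at `v` of orders `1, …, m` vanish, where `α < m + 1`. -/
lemma IsPowerFun.sum_eq_zero_of_rankOne_superadditive {α : ℝ} {f : ℝ → ℝ} (hf : IsPowerFun α f)
    {s : Finset V}
    (hsup : ∀ u v w : V → ℝ, (∀ i ∉ s, u i = 0) → (∀ i ∉ s, v i = 0) → (∀ i ∉ s, w i = 0) →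
      (∑ i, w i * f (u i)) ^ 2 + (∑ i, w i * f (v i)) ^ 2 ≤
        quadForm ((vecMulVec u u + vecMulVec v v).map f) w)
    {m : ℕ} (hm : α < m + 1) {v w : V → ℝ} (hv : ∀ i ∉ s, v i = 0) (hw : ∀ i ∉ s, w i = 0)
    (hmom : ∀ k, 1 ≤ k → k ≤ m → ∑ i, w i * v i ^ k = 0) : ∑ i, w i * f (v i) = 0 := by
  classical
  obtain ⟨c, hc0, hc⟩ := exists_one_add_rpow_taylor α m
  set R : ℝ → ℝ := fun x => (1 + x) ^ α - ∑ k ∈ range (m + 1), c k * x ^ k with hR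
  set S := ∑ i, w i * f (v i) with hS
  have hlim : ∀ b : ℝ, Filter.Tendsto (fun ε : ℝ => ε * b) (nhds 0) (nhds 0) := fun b => by
    simpa using (continuous_mul_const b).tendsto 0
  have hE : (fun ε : ℝ => ∑ i, ∑ j, w i * w j * R (ε * (v i * v j))) =O[nhds 0]
      fun ε => ε ^ (m + 1) := by
    refine Asymptotics.IsBigO.fun_sum fun i _ => Asymptotics.IsBigO.fun_sum fun j _ =>
      Asymptotics.IsBigO.const_mul_left ?_ _
    refine (hc.comp_tendsto (hlim (v i * v j))).trans ?_
    simp only [Function.comp_def, mul_pow]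
    simp_rw [mul_comm _ ((v i) ^ (m + 1) * (v j) ^ (m + 1))]
    exact Asymptotics.isBigO_const_mul_self _ _ _
  obtain ⟨D, hD⟩ := hE.bound
  have hpos : ∀ᶠ ε : ℝ in nhds 0, ∀ i j, 0 < 1 + ε * (v i * v j) := by
    refine Filter.eventually_all.2 fun i => Filter.eventually_all.2 fun j => ?_
    filter_upwards [(hlim (v i * v j)).eventually (lt_mem_nhds (show (-1 : ℝ) < 0 by norm_num))]
      with ε hε
    linarith
  have hineq : ∀ᶠ ε : ℝ in nhdsWithin 0 (Ioi 0), S ^ 2 ≤ D * ε ^ ((m + 1 : ℝ) - α) := by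
    filter_upwards [nhdsWithin_le_nhds hD, nhdsWithin_le_nhds hpos, self_mem_nhdsWithin]
      with ε hDε hposε (hε : 0 < ε)
    set u : V → ℝ := fun i => if i ∈ s then 1 else 0 with hu
    have h := hsup u (fun i => √ε * v i) w (fun i hi => by simp [hu, hi])
      (fun i hi => by simp [hv i hi]) hw
    have hu1 : ∑ i, w i * f (u i) = ∑ i, w i := by
      refine sum_congr rfl fun i _ => ?_
      by_cases hi : i ∈ s
      · simp [hu, hi, hf.map_one]
      · simp [hw i hi]
    have hv1 : (∑ i, w i * f (√ε * v i)) ^ 2 = ε ^ α * S ^ 2 := by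
      have : ∑ i, w i * f (√ε * v i) = f √ε * S := by
        rw [hS, Finset.mul_sum]
        exact sum_congr rfl fun i _ => by rw [hf.map_mul]; ring
      rw [this, mul_pow, sq (f √ε), ← hf.map_mul, Real.mul_self_sqrt hε.le, hf.of_pos hε]
    have hq : quadForm ((vecMulVec u u + vecMulVec (fun i => √ε * v i) fun i => √ε * v i).map f) w
        = (∑ i, w i) ^ 2 + ∑ i, ∑ j, w i * w j * R (ε * (v i * v j)) := by
      have hent : ∀ i j, w i * w j * f (u i * u j + √ε * v i * (√ε * v j)) =
          (∑ k ∈ range (m + 1), c k * ε ^ k * ((w i * v i ^ k) * (w j * v j ^ k))) +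
            w i * w j * R (ε * (v i * v j)) := by
        intro i j
        by_cases hi : i ∈ s
        · by_cases hj : j ∈ s
          · have hs : u i * u j + √ε * v i * (√ε * v j) = 1 + ε * (v i * v j) := by
              simp only [hu, hi, hj, if_true]
              linear_combination (v i * v j) * Real.mul_self_sqrt hε.le
            have hsum : ∑ k ∈ range (m + 1), c k * ε ^ k * ((w i * v i ^ k) * (w j * v j ^ k)) =
                w i * w j * ∑ k ∈ range (m + 1), c k * (ε * (v i * v j)) ^ k := by
              rw [Finset.mul_sum]
              exact sum_congr rfl fun k _ => by ring
            rw [hs, hf.of_pos (hposε i j), hR, hsum]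
            ring
          · simp [hw j hj]
        · simp [hw i hi]
      have hk : ∀ k, ∑ i, ∑ j, c k * ε ^ k * ((w i * v i ^ k) * (w j * v j ^ k)) =
          c k * ε ^ k * (∑ i, w i * v i ^ k) ^ 2 := fun k => by
        rw [sq, sum_mul_sum]
        simp only [Finset.mul_sum]
      simp only [quadForm, Matrix.map_apply, Matrix.add_apply, vecMulVec_apply, hent,
        sum_add_distrib]
      congr 1
      have hcomm : ∑ i, ∑ j, ∑ k ∈ range (m + 1),
          c k * ε ^ k * ((w i * v i ^ k) * (w j * v j ^ k)) =
          ∑ k ∈ range (m + 1), c k * ε ^ k * (∑ i, w i * v i ^ k) ^ 2 := by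
        simp only [← hk]
        rw [Finset.sum_comm (s := range (m + 1))]
        exact sum_congr rfl fun i _ => Finset.sum_comm
      rw [hcomm, Finset.sum_eq_single 0]
      · simp [hc0]
      · intro k hk hk0
        rw [hmom k (by omega) (by simpa [Nat.lt_succ_iff] using hk)]
        simp
      · simp
    rw [hu1, hv1, hq] at h
    have hle : ε ^ α * S ^ 2 ≤ D * ε ^ (m + 1) := by
      rw [Real.norm_eq_abs, Real.norm_eq_abs, abs_of_pos (pow_pos hε _)] at hDε
      linarith [le_abs_self (∑ i, ∑ j, w i * w j * R (ε * (v i * v j)))]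
    have hrw : ε ^ (m + 1) = ε ^ α * ε ^ ((m + 1 : ℝ) - α) := by
      rw [← Real.rpow_add hε, ← Real.rpow_natCast]
      push_cast
      ring_nf
    rw [hrw, mul_left_comm] at hle
    exact le_of_mul_le_mul_left hle (Real.rpow_pos_of_pos hε α)
  have hto : Filter.Tendsto (fun ε : ℝ => D * ε ^ ((m + 1 : ℝ) - α)) (nhdsWithin 0 (Ioi 0))
      (nhds 0) := by
    have hp : 0 < (m + 1 : ℝ) - α := by linarith
    have h := ((Real.continuous_rpow_const hp.le).tendsto 0).const_mul D
    rw [Real.zero_rpow hp.ne', mul_zero] at h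
    exact h.mono_left nhdsWithin_le_nhds
  have hS0 : S ^ 2 ≤ 0 := ge_of_tendsto hto hineq
  exact pow_eq_zero_iff two_ne_zero |>.1 (le_antisymm hS0 (sq_nonneg S))

/-- Preservation of positivity on a graph in which two cliques are glued along `s` forces
super-additivity on rank-one matrices supported on `s`. -/
lemma rankOne_superadditive_of_preserves {G : SimpleGraph V} {α : ℝ} {f : ℝ → ℝ}
    (hf : IsPowerFun α f) (hpres : ∀ M ∈ PsetG G Set.univ, (M.map f).PosSemidef)
    {s : Finset V} (hs : ∀ i ∈ s, ∀ j ∈ s, i ≠ j → G.Adj i j) {v₁ v₂ : V} (h12 : v₁ ≠ v₂)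
    (h1s : v₁ ∉ s) (h2s : v₂ ∉ s) (hadj₁ : ∀ c ∈ s, G.Adj v₁ c) (hadj₂ : ∀ c ∈ s, G.Adj v₂ c)
    {u v w : V → ℝ} (hu : ∀ i ∉ s, u i = 0) (hv : ∀ i ∉ s, v i = 0) (hw : ∀ i ∉ s, w i = 0) :
    (∑ i, w i * f (u i)) ^ 2 + (∑ i, w i * f (v i)) ^ 2 ≤
      quadForm ((vecMulVec u u + vecMulVec v v).map f) w := by
  classical
  set a : V → ℝ := u + Pi.single v₁ 1 with ha
  set b : V → ℝ := v + Pi.single v₂ 1 with hb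
  have hclique : ∀ (x : V → ℝ) (k : V), (∀ i ∉ s, x i = 0) → (∀ c ∈ s, G.Adj k c) →
      ∀ i j, i ≠ j → ¬ G.Adj i j →
        (x + Pi.single k 1 : V → ℝ) i * (x + Pi.single k 1 : V → ℝ) j = 0 := by
    intro x k hx hk i j hij hnadj
    have hz : ∀ l, l ∉ s → l ≠ k → (x + Pi.single k 1 : V → ℝ) l = 0 := fun l hl hlk => by
      simp [hx l hl, hlk]
    by_contra hne
    obtain ⟨hi, hj⟩ := mul_ne_zero_iff.1 hne
    by_cases his : i ∈ s <;> by_cases hjs : j ∈ s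
    · exact hnadj (hs i his j hjs hij)
    · have hjk : j = k := by_contra fun h => hj (hz j hjs h)
      exact hnadj (hjk ▸ (hk i his).symm)
    · have hik : i = k := by_contra fun h => hi (hz i his h)
      exact hnadj (hik ▸ hk j hjs)
    · have hjk : j = k := by_contra fun h => hj (hz j hjs h)
      have hik : i = k := by_contra fun h => hi (hz i his h)
      exact hij (hik.trans hjk.symm)
  set P := vecMulVec a a + vecMulVec b b with hP
  have hPpos : P.PosSemidef := (posSemidef_vecMulVec_self a).add (posSemidef_vecMulVec_self b)
  have hmem : P ∈ PsetG G Set.univ := by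
    refine ⟨hPpos, fun _ _ => Set.mem_univ _, fun i j hij hnadj => ?_⟩
    rw [hP, Matrix.add_apply, vecMulVec_apply, vecMulVec_apply,
      hclique u v₁ hu hadj₁ i j hij hnadj, hclique v v₂ hv hadj₂ i j hij hnadj, add_zero]
  have hpos := (posSemidef_iff_quadForm.1 (hpres P hmem)).2
    (w + Pi.single v₁ (-∑ i, w i * f (u i)) + Pi.single v₂ (-∑ i, w i * f (v i)))
  rw [quadForm_single_add (isHermitian_map hPpos f),
    quadForm_single_add (isHermitian_map hPpos f)] at hpos
  have hne1 : ∀ i ∈ s, i ≠ v₁ := fun i hi h => h1s (h ▸ hi)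
  have hne2 : ∀ i ∈ s, i ≠ v₂ := fun i hi h => h2s (h ▸ hi)
  have hq : quadForm (P.map f) w = quadForm ((vecMulVec u u + vecMulVec v v).map f) w := by
    rw [quadForm_eq_sum_of_support _ hw, quadForm_eq_sum_of_support _ hw]
    refine sum_congr rfl fun i hi => sum_congr rfl fun j hj => ?_
    simp [hP, ha, hb, vecMulVec_apply, hne1 i hi, hne1 j hj, hne2 i hi, hne2 j hj]
  have hcol1 : ∑ i, w i * P.map f i v₁ = ∑ i, w i * f (u i) := by
    refine sum_congr rfl fun i _ => ?_
    by_cases hi : i ∈ s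
    · simp [hP, ha, hb, vecMulVec_apply, hne1 i hi, hu v₁ h1s, hv v₁ h1s, h12]
    · simp [hw i hi]
  have h21 : P v₁ v₂ = 0 := by
    simp [hP, ha, hb, vecMulVec_apply, hu v₁ h1s, hu v₂ h2s, hv v₁ h1s, hv v₂ h2s, h12, h12.symm]
  have hcol2 : ∑ i, (w + Pi.single v₁ (-∑ i, w i * f (u i)) : V → ℝ) i * P.map f i v₂ =
      ∑ i, w i * f (v i) := by
    simp only [Pi.add_apply, add_mul, sum_add_distrib]
    rw [Finset.sum_eq_single (f := fun i => (Pi.single v₁ (-∑ i, w i * f (u i)) : V → ℝ) i *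
      P.map f i v₂) v₁ (fun i _ hi => by simp [hi]) (by simp)]
    rw [Matrix.map_apply, h21, hf.map_zero, mul_zero, add_zero]
    refine sum_congr rfl fun i _ => ?_
    by_cases hi : i ∈ s
    · simp [hP, ha, hb, vecMulVec_apply, hne2 i hi, hu v₂ h2s, hv v₂ h2s, h12.symm]
    · simp [hw i hi]
  have hd1 : P.map f v₁ v₁ = 1 := by
    simp [hP, ha, hb, vecMulVec_apply, hu v₁ h1s, hv v₁ h1s, h12, hf.map_one]
  have hd2 : P.map f v₂ v₂ = 1 := by
    simp [hP, ha, hb, vecMulVec_apply, hu v₂ h2s, hv v₂ h2s, h12.symm, hf.map_one]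
  rw [hcol2, hcol1, hd1, hd2, hq] at hpos
  linarith

end

/-- **Theorem 3.3(2)**: if `(A,C,B)` is a decomposition of `G`, `f = ψ_α` or `f = φ_α`, and
`f[−]` preserves positivity on `P_G`, then `f[−]` is Loewner super-additive on `P_{G_{C'}}(ℝ)`
for every `C' ⊆ C` admitting vertices `v₁ ∈ A`, `v₂ ∈ B` adjacent to every vertex of `C'`. -/
theorem decomposition_superadditive {V : Type*} [Fintype V] (G : SimpleGraph V)
    (A C B : Set V) (hdec : IsDecomposition G A C B)
    (α : ℝ) (f : ℝ → ℝ) (hf : f = psiF α ∨ f = phiF α)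
    (hpres : ∀ M ∈ PsetG G univ, (M.map f).PosSemidef)
    (C' : Set V) (hC' : C' ⊆ C)
    (v₁ v₂ : V) (hv₁ : v₁ ∈ A) (hv₂ : v₂ ∈ B)
    (hadj₁ : ∀ c ∈ C', G.Adj v₁ c) (hadj₂ : ∀ c ∈ C', G.Adj v₂ c) :
    ∀ M ∈ PsetSub G C', ∀ N ∈ PsetSub G C',
      ((M + N).map f - M.map f - N.map f) ∈ PsetSub G C' := by
  classical
  have hf' : IsPowerFun α f := hf
  obtain ⟨-, hAC, hAB, hCB, -, hCclique⟩ := hdec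
  set s : Finset V := C'.toFinset with hs
  have hmem : ∀ i, i ∈ s ↔ i ∈ C' := fun i => Set.mem_toFinset
  have hsup : ∀ u v w : V → ℝ, (∀ i ∉ s, u i = 0) → (∀ i ∉ s, v i = 0) → (∀ i ∉ s, w i = 0) →
      (∑ i, w i * f (u i)) ^ 2 + (∑ i, w i * f (v i)) ^ 2 ≤
        quadForm ((vecMulVec u u + vecMulVec v v).map f) w := fun u v w hu hv hw =>
    rankOne_superadditive_of_preserves hf' hpres
      (fun i hi j hj hij =>
        hCclique i (hC' ((hmem i).1 hi)) j (hC' ((hmem j).1 hj)) hij)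
      (by rintro rfl; exact Set.disjoint_left.1 hAB hv₁ hv₂)
      (fun h => Set.disjoint_left.1 hAC hv₁ (hC' ((hmem v₁).1 h)))
      (fun h => Set.disjoint_left.1 hCB (hC' ((hmem v₂).1 h)) hv₂)
      (fun c hc => hadj₁ c ((hmem c).1 hc)) (fun c hc => hadj₂ c ((hmem c).1 hc)) hu hv hw
  rintro M ⟨hM, hMs, hMG⟩ N ⟨hN, hNs, hNG⟩
  have hzero : ∀ i j, M i j = 0 → N i j = 0 →
      ((M + N).map f - M.map f - N.map f) i j = 0 := fun i j h1 h2 => by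
    simp [h1, h2, hf'.map_zero]
  refine ⟨?_, fun i j h => hzero i j (hMs i j h) (hNs i j h),
    fun i j hij h => hzero i j (hMG i j hij h) (hNG i j hij h)⟩
  rcases s.eq_empty_or_nonempty with hs0 | ⟨a, ha⟩
  · have h0 : (M + N).map f - M.map f - N.map f = 0 := by
      ext i j
      have hi : i ∉ C' := fun hi => by simpa [hs0] using (hmem i).2 hi
      exact hzero i j (hMs i j (.inl hi)) (hNs i j (.inl hi))
    rw [h0]
    exact PosSemidef.zero
  have hα1 : 1 ≤ α := by
    have hsupp : ∀ i ∉ s, (Pi.single a 1 : V → ℝ) i = 0 := fun i hi =>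
      Pi.single_eq_of_ne (ne_of_mem_of_not_mem ha hi).symm 1
    have h := hsup _ _ _ hsupp hsupp hsupp
    have hq : quadForm ((vecMulVec (Pi.single a (1 : ℝ)) (Pi.single a 1) +
        vecMulVec (Pi.single a 1) (Pi.single a 1)).map f) (Pi.single a (1 : ℝ)) =
        (2 : ℝ) ^ α := by
      simp [quadForm, Pi.single_apply, vecMulVec_apply, one_add_one_eq_two, hf'.of_pos]
    rw [hq] at h
    simp only [Pi.single_apply, ite_mul, one_mul, zero_mul, Finset.sum_ite_eq', Finset.mem_univ,
      if_true, hf'.map_one] at h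
    refine (Real.rpow_le_rpow_left_iff one_lt_two).1 ?_
    linarith [Real.rpow_one (2 : ℝ)]
  by_cases hpoly : ∃ p : Polynomial ℝ, ∀ x, p.eval x = f x
  · obtain ⟨p, hp⟩ := hpoly
    obtain ⟨k, hk, hfk⟩ := hf'.eq_pow_of_eval_eq p hp
    obtain ⟨l, rfl⟩ : ∃ l, k = l + 1 := by
      refine ⟨k - 1, ?_⟩
      have : 1 ≤ k := by exact_mod_cast hk ▸ hα1
      omega
    rw [funext hfk]
    exact (posSemidef_pow_superadditive hM hN l).2.2
  push Not at hpoly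
  have hcard : (s.card : ℝ) ≤ α := by
    by_contra! hlt
    have hfl : ⌊α⌋₊ + 1 ≤ s.card := (Nat.floor_lt (by linarith)).2 hlt
    obtain ⟨v, w, hv, hw, hmom, hne⟩ := exists_moments_eq_zero hpoly hfl
    exact hne (hf'.sum_eq_zero_of_rankOne_superadditive hsup (Nat.lt_floor_add_one α) hv hw hmom)
  refine posSemidef_iff_quadForm.2 ⟨((isHermitian_map (hM.add hN) f).sub
    (isHermitian_map hM f)).sub (isHermitian_map hN f), fun w => ?_⟩
  have hw : quadForm ((M + N).map f - M.map f - N.map f) w =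
      quadForm ((M + N).map f - M.map f - N.map f) fun i => if i ∈ s then w i else 0 := by
    refine Finset.sum_congr rfl fun i _ => Finset.sum_congr rfl fun j _ => ?_
    by_cases hij : i ∈ s ∧ j ∈ s
    · simp [hij.1, hij.2]
    · have h : i ∉ C' ∨ j ∉ C' := by simpa [hmem, imp_iff_not_or] using hij
      rw [hzero i j (hMs i j h) (hNs i j h), mul_zero, mul_zero]
  rw [hw]
  exact hf'.quadForm_map_superadditive hcard hM hN fun i hi => by simp [hi]
end
end

section
/- Let G = (V,E) be a finite simple graph with a decomposition (A,C,B) of V, and let M be a real symmetric V×V matrix whose principal submatrices M_{AA} and M_{BB} are invertible. Then the following are equivalent: (1) M ∈ P_G; (2) M = M_1 + M_2 for some matrices M_1 ∈ P_{G_{A∪C}} and M_2 ∈ P_{G_{B∪C}} (matrices indexed by subsets of V are identified with V×V matrices by padding with zeros). -/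
open Set Matrix

noncomputable section

/-- The part of `M` captured by the columns indexed by `S`: the matrix
`M_{VS} (M_{SS})⁻¹ M_{SV}`, whose complement in `M` is the padded Schur complement. -/
def schurPart {V : Type*} [DecidableEq V] (M : Matrix V V ℝ) (S : Finset V) :
    Matrix V V ℝ :=
  M.submatrix id (fun a : S => (a : V)) *
    (M.submatrix (fun a : S => (a : V)) (fun a : S => (a : V)))⁻¹ *
      M.submatrix (fun a : S => (a : V)) id

section SchurPart

variable {V : Type*} [DecidableEq V] {M : Matrix V V ℝ} {S : Finset V}

theorem schurPart_apply_of_mem_right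
    (hS : IsUnit (M.submatrix (fun a : S => (a : V)) (fun a : S => (a : V))))
    (i : V) {j : V} (hj : j ∈ S) : schurPart M S i j = M i j := by
  have h : (schurPart M S).submatrix id (fun a : S => (a : V)) =
      M.submatrix id (fun a : S => (a : V)) := by
    change M.submatrix id (fun a : S => (a : V)) *
      (M.submatrix (fun a : S => (a : V)) (fun a : S => (a : V)))⁻¹ *
        M.submatrix (fun a : S => (a : V)) (fun a : S => (a : V)) = _
    rw [Matrix.mul_assoc, nonsing_inv_mul _ ((isUnit_iff_isUnit_det _).1 hS), Matrix.mul_one]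
  exact congrFun (congrFun h i) ⟨j, hj⟩

theorem schurPart_apply_eq_zero_of_right (i : V) {j : V} (hj : ∀ a ∈ S, M a j = 0) :
    schurPart M S i j = 0 := by
  rw [schurPart, Matrix.mul_apply]
  exact Finset.sum_eq_zero fun a _ => by rw [submatrix_apply, id, hj a a.2, mul_zero]

theorem posSemidef_schurPart [Fintype V] (hM : M.PosSemidef) : (schurPart M S).PosSemidef := by
  have hR : (M.submatrix (fun a : S => (a : V)) id)ᴴ = M.submatrix id (fun a : S => (a : V)) := by
    rw [conjTranspose_submatrix, hM.isHermitian.eq]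
  have h := ((hM.submatrix (fun a : S => (a : V))).inv).conjTranspose_mul_mul_same
    (M.submatrix (fun a : S => (a : V)) id)
  rwa [hR] at h

theorem posSemidef_sub_schurPart [Fintype V] (hM : M.PosSemidef)
    (hS : IsUnit (M.submatrix (fun a : S => (a : V)) (fun a : S => (a : V)))) :
    (M - schurPart M S).PosSemidef := by
  set E : Matrix V S ℝ := (1 : Matrix V V ℝ).submatrix id (fun a : S => (a : V)) with hE
  set R := M.submatrix (fun a : S => (a : V)) id with hR
  set K := M.submatrix (fun a : S => (a : V)) (fun a : S => (a : V)) with hK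
  have hK_inv : K⁻¹ᴴ = K⁻¹ := ((hM.submatrix (fun a : S => (a : V))).inv).isHermitian.eq
  have hRH : Rᴴ = M.submatrix id (fun a : S => (a : V)) := by
    rw [hR, conjTranspose_submatrix, hM.isHermitian.eq]
  have hME : M * E = Rᴴ := by
    rw [hRH]
    ext i j
    simp [hE, Matrix.mul_apply, Matrix.one_apply]
  have hEM : Eᴴ * M = R := by
    rw [← conjTranspose_conjTranspose R, ← hME, conjTranspose_mul, hM.isHermitian.eq]
  have hRE : R * E = K := by
    ext i j
    simp [hE, hR, hK, Matrix.mul_apply, Matrix.one_apply]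
  have hcancel : K⁻¹ * K = 1 := nonsing_inv_mul _ ((isUnit_iff_isUnit_det _).1 hS)
  have hpart : schurPart M S = Rᴴ * K⁻¹ * R := by rw [hRH]; rfl
  have hleft : (1 - E * (K⁻¹ * R))ᴴ * M = M - Rᴴ * K⁻¹ * R := by
    simp only [conjTranspose_sub, conjTranspose_one, conjTranspose_mul, hK_inv, Matrix.sub_mul,
      Matrix.one_mul, Matrix.mul_assoc, hEM]
  have hkill : (M - Rᴴ * K⁻¹ * R) * E = 0 := by
    rw [Matrix.sub_mul, hME, Matrix.mul_assoc _ R E, hRE, Matrix.mul_assoc, hcancel,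
      Matrix.mul_one, sub_self]
  have h := hM.conjTranspose_mul_mul_same (1 - E * (K⁻¹ * R))
  rwa [hleft, Matrix.mul_sub, Matrix.mul_one, ← Matrix.mul_assoc, hkill, Matrix.zero_mul,
    sub_zero, ← hpart] at h

end SchurPart

theorem IsDecomposition.not_adj {V : Type*} {G : SimpleGraph V} {A C B : Set V}
    (h : IsDecomposition G A C B) {a b : V} (ha : a ∈ A) (hb : b ∈ B) : ¬ G.Adj a b := by
  obtain ⟨-, hAC, -, hCB, hsep, -⟩ := h
  intro hab
  obtain ⟨c, hc, hp⟩ := hsep a ha b hb hab.toWalk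
  have : c = a ∨ c = b := by simpa using hp
  rcases this with rfl | rfl
  · exact hAC.notMem_of_mem_left ha hc
  · exact hCB.notMem_of_mem_left hc hb

/-- **Lemma 3.6**: if `(A,C,B)` is a decomposition of `G` and `M` is a symmetric matrix whose
principal submatrices `M_{AA}` and `M_{BB}` are invertible, then `M ∈ P_G` if and only if
`M = M₁ + M₂` with `M₁ ∈ P_{G_{A∪C}}` and `M₂ ∈ P_{G_{B∪C}}` (padding by zeros). -/
theorem decomposition_of_matrix {V : Type*} [Fintype V] [DecidableEq V] (G : SimpleGraph V)
    (A C B : Finset V) (hdec : IsDecomposition G ↑A ↑C ↑B)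
    (M : Matrix V V ℝ) (hsymm : M.IsSymm)
    (hA : IsUnit (M.submatrix (fun a : ↥A => (a : V)) (fun a : ↥A => (a : V))))
    (hB : IsUnit (M.submatrix (fun b : ↥B => (b : V)) (fun b : ↥B => (b : V)))) :
    M ∈ PsetG G univ ↔
      ∃ M₁ ∈ PsetSub G ↑(A ∪ C), ∃ M₂ ∈ PsetSub G ↑(B ∪ C), M = M₁ + M₂ := by
  constructor
  · rintro ⟨hM, -, hpat⟩
    have hpart := posSemidef_schurPart (S := A) hM
    have hsymm_part (i j : V) : schurPart M A i j = schurPart M A j i := by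
      simpa using (hpart.isHermitian.apply i j).symm
    have hright (i j : V) (hj : j ∈ A) : schurPart M A i j = M i j :=
      schurPart_apply_of_mem_right hA i hj
    have hleft (i j : V) (hi : i ∈ A) : schurPart M A i j = M i j := by
      rw [hsymm_part, hright _ _ hi, hsymm.apply]
    have hzero_right (i j : V) (hj : j ∉ A ∪ C) : schurPart M A i j = 0 := by
      have hjB : j ∈ B := by
        have := hdec.1 j
        simp only [Finset.mem_coe, Finset.mem_union] at this hj
        tauto
      refine schurPart_apply_eq_zero_of_right i fun a ha => hpat a j ?_ (hdec.not_adj ha hjB)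
      rintro rfl
      exact hj (Finset.mem_union_left _ ha)
    have hzero (i j : V) (hij : i ∉ A ∪ C ∨ j ∉ A ∪ C) : schurPart M A i j = 0 := by
      rcases hij with hi | hj
      · rw [hsymm_part, hzero_right _ _ hi]
      · exact hzero_right i j hj
    have hpat_part (i j : V) (hij : i ≠ j) (hadj : ¬ G.Adj i j) : schurPart M A i j = 0 := by
      by_cases hi : i ∈ A
      · rw [hleft i j hi, hpat i j hij hadj]
      by_cases hj : j ∈ A
      · rw [hright i j hj, hpat i j hij hadj]
      refine hzero i j ?_
      by_contra! h
      simp only [Finset.mem_union, hi, hj, false_or] at h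
      exact hadj (hdec.2.2.2.2.2 i h.1 j h.2 hij)
    have hmem (v : V) (hv : v ∉ B ∪ C) : v ∈ A := by
      have := hdec.1 v
      simp only [Finset.mem_coe, Finset.mem_union] at this hv
      tauto
    refine ⟨schurPart M A, ⟨hpart, hzero, hpat_part⟩, M - schurPart M A,
      ⟨posSemidef_sub_schurPart hM hA, ?_, ?_⟩, (add_sub_cancel _ _).symm⟩
    · rintro i j (hi | hj)
      · rw [Matrix.sub_apply, hleft i j (hmem i hi), sub_self]
      · rw [Matrix.sub_apply, hright i j (hmem j hj), sub_self]
    · intro i j hij hadj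
      rw [Matrix.sub_apply, hpat i j hij hadj, hpat_part i j hij hadj, sub_zero]
  · rintro ⟨M₁, ⟨h₁, -, hpat₁⟩, M₂, ⟨h₂, -, hpat₂⟩, rfl⟩
    refine ⟨h₁.add h₂, fun _ _ => mem_univ _, fun i j hij hadj => ?_⟩
    rw [Matrix.add_apply, hpat₁ i j hij hadj, hpat₂ i j hij hadj, add_zero]
end
end

section
/- Let G = (V,E) be a finite simple graph with a decomposition (A,C,B), and suppose there exist vertices v_1 ∈ A and v_2 ∈ B adjacent to every vertex of C. Let α ∈ ℝ and let f = ψ_α or f = φ_α. Then f[−] preserves positivity on P_G if and only if either: (1) α is an odd positive integer in case f = ψ_α, respectively an even positive integer in case f = φ_α; or (2) f[−] preserves positivity on P_{G_{A∪C}} and on P_{G_{B∪C}}, and |α| ≥ |C|. -/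
open Set Matrix

noncomputable section

/-- The odd (`true`) and even (`false`) extensions of the power function. -/
def powExt : Bool → ℝ → ℝ → ℝ
  | true => psiF
  | false => phiF

/-- The value at `-1` of the odd (`true`) and even (`false`) extensions. -/
def paritySign : Bool → ℝ
  | true => -1
  | false => 1

@[simp] lemma powExt_zero (b : Bool) (α : ℝ) : powExt b α 0 = 0 := by
  cases b <;> simp [powExt, psiF, phiF]

lemma powExt_of_pos (b : Bool) (α : ℝ) {x : ℝ} (hx : 0 < x) : powExt b α x = x ^ α := by
  cases b <;> simp [powExt, psiF, phiF, Real.sign_of_pos hx, abs_of_pos hx, hx.ne']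

@[simp] lemma powExt_one (b : Bool) (α : ℝ) : powExt b α 1 = 1 := by
  simp [powExt_of_pos]

lemma powExt_neg (b : Bool) (α x : ℝ) :
    powExt b α (-x) = paritySign b * powExt b α x := by
  cases b <;> simp [powExt, psiF, phiF, paritySign, Real.sign_neg]

lemma paritySign_not (b : Bool) : paritySign (!b) = -paritySign b := by
  cases b <;> simp [paritySign]

lemma powExt_nonneg (b : Bool) (α : ℝ) {x : ℝ} (hx : 0 ≤ x) : 0 ≤ powExt b α x := by
  rcases hx.eq_or_lt with rfl | hx
  · simp
  · rw [powExt_of_pos b α hx]; positivity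

lemma powExt_mono (b : Bool) {α : ℝ} (hα : 0 ≤ α) {x y : ℝ} (hx : 0 ≤ x) (hxy : x ≤ y) :
    powExt b α x ≤ powExt b α y := by
  rcases hx.eq_or_lt with rfl | hx
  · simpa using powExt_nonneg b α hxy
  · rw [powExt_of_pos b α hx, powExt_of_pos b α (hx.trans_le hxy)]
    exact Real.rpow_le_rpow hx.le hxy hα

lemma powExt_mul (b : Bool) (α x y : ℝ) :
    powExt b α (x * y) = powExt b α x * powExt b α y := by
  cases b
  · simp only [powExt, phiF, mul_eq_zero, abs_mul]
    split_ifs <;> simp_all [Real.mul_rpow]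
  · simp only [powExt, psiF, abs_mul, Real.mul_rpow (abs_nonneg x) (abs_nonneg y)]
    have : Real.sign (x * y) = Real.sign x * Real.sign y := by
      rcases lt_trichotomy x 0 with hx | rfl | hx <;> rcases lt_trichotomy y 0 with hy | rfl | hy <;>
        simp [Real.sign_of_neg, Real.sign_of_pos, *, mul_pos_of_neg_of_neg, mul_neg_of_neg_of_pos,
          mul_neg_of_pos_of_neg]
    rw [this]; ring

lemma powExt_superadditive (b : Bool) {α : ℝ} (hα : 1 ≤ α) {x y : ℝ} (hx : 0 ≤ x) (hy : 0 ≤ y) :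
    powExt b α x + powExt b α y ≤ powExt b α (x + y) := by
  rcases hx.eq_or_lt with rfl | hx
  · simp
  rcases hy.eq_or_lt with rfl | hy
  · simp
  rw [powExt_of_pos b α hx, powExt_of_pos b α hy, powExt_of_pos b α (add_pos hx hy)]
  exact Real.add_rpow_le_rpow_add hx.le hy.le hα

lemma continuous_powExt_exponent (b : Bool) (x : ℝ) : Continuous fun α => powExt b α x := by
  have key : ∀ y : ℝ, 0 < y → Continuous fun α => powExt b α y := fun y hy => by
    simp only [powExt_of_pos b _ hy]
    exact Real.continuous_const_rpow hy.ne'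
  rcases lt_trichotomy x 0 with hx | rfl | hx
  · have h := (key (-x) (by linarith)).const_mul (paritySign b)
    simpa only [← powExt_neg, neg_neg] using h
  · simpa using continuous_const
  · exact key x hx

lemma hasDerivAt_powExt (b : Bool) {α : ℝ} (hα : 1 < α) (x : ℝ) :
    HasDerivAt (powExt b α) (α * powExt (!b) (α - 1) x) x := by
  have hpos : ∀ y : ℝ, 0 < y → HasDerivAt (powExt b α) (α * powExt (!b) (α - 1) y) y := by
    intro y hy
    rw [powExt_of_pos _ _ hy]
    refine (Real.hasDerivAt_rpow_const (Or.inl hy.ne')).congr_of_eventuallyEq ?_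
    filter_upwards [lt_mem_nhds hy] with z hz using powExt_of_pos b α hz
  rcases lt_trichotomy x 0 with hx | rfl | hx
  · have h := ((hpos (-x) (by linarith)).comp x (hasDerivAt_neg x)).const_mul (paritySign b)
    have e : (fun y => paritySign b * (powExt b α ∘ Neg.neg) y) = powExt b α := by
      funext y
      simp only [Function.comp_apply, ← powExt_neg, neg_neg]
    rw [e] at h
    have e' : paritySign b * (α * powExt (!b) (α - 1) (-x) * -1) = α * powExt (!b) (α - 1) x := by
      rw [powExt_neg, paritySign_not]
      cases b <;> simp [paritySign]
    rwa [e'] at h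
  · rw [powExt_zero, mul_zero]
    have h := hasDerivAt_abs_rpow 0 hα
    rw [mul_zero, hasDerivAt_iff_isLittleO] at h
    rw [hasDerivAt_iff_isLittleO]
    refine (Asymptotics.isBigO_of_le _ fun y => ?_).trans_isLittleO h
    have h0 : (0 : ℝ) ^ α = 0 := Real.zero_rpow (by linarith)
    rcases lt_trichotomy y 0 with hy | rfl | hy
    · have := powExt_neg b α (-y)
      rw [neg_neg, powExt_of_pos b α (neg_pos.2 hy)] at this
      cases b <;> simp [this, paritySign, h0, abs_of_neg hy]
    · simp
    · simp [powExt_of_pos b α hy, abs_of_pos hy, h0]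
  · exact hpos x hx

lemma posSemidef_real_iff {V : Type*} [Fintype V] {M : Matrix V V ℝ} :
    M.PosSemidef ↔ M.IsHermitian ∧ ∀ x : V → ℝ, 0 ≤ ∑ i, ∑ j, x i * M i j * x j := by
  rw [posSemidef_iff_dotProduct_mulVec]
  simp [dotProduct, mulVec, Finset.mul_sum, mul_assoc]

lemma isHermitian_map_s6 {V : Type*} {M : Matrix V V ℝ} (h : M.IsHermitian) (f : ℝ → ℝ) :
    (M.map f).IsHermitian :=
  h.map f fun _ => rfl

lemma posSemidef_rankOne {V : Type*} [Finite V] (a : V → ℝ) : (vecMulVec a a).PosSemidef := by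
  simpa using posSemidef_vecMulVec_self_star a

/-- A matrix-valued path with positive semidefinite derivative is Loewner monotone. -/
lemma posSemidef_sub_of_hasDerivAt {V : Type*} [Fintype V] (D D' : ℝ → Matrix V V ℝ)
    (hD : ∀ t i j, HasDerivAt (fun s => D s i j) (D' t i j) t)
    (hpos : ∀ t ∈ Ioo (0 : ℝ) 1, (D' t).PosSemidef) (hH : (D 1 - D 0).IsHermitian) :
    (D 1 - D 0).PosSemidef := by
  refine posSemidef_real_iff.2 ⟨hH, fun x => ?_⟩
  set F : ℝ → ℝ := fun t => ∑ i, ∑ j, x i * D t i j * x j with hF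
  have hder : ∀ t, HasDerivAt F (∑ i, ∑ j, x i * D' t i j * x j) t := fun t =>
    HasDerivAt.fun_sum fun i _ => HasDerivAt.fun_sum fun j _ =>
      ((hD t i j).const_mul (x i)).mul_const (x j)
  have hmono : MonotoneOn F (Icc 0 1) := by
    refine monotoneOn_of_deriv_nonneg (convex_Icc 0 1)
      (fun t _ => (hder t).continuousAt.continuousWithinAt)
      (fun t _ => (hder t).differentiableAt.differentiableWithinAt) fun t ht => ?_
    rw [interior_Icc] at ht
    rw [(hder t).deriv]
    exact (posSemidef_real_iff.1 (hpos t ht)).2 x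
  have h01 : F 0 ≤ F 1 := hmono (by simp) (by simp) zero_le_one
  have : ∑ i, ∑ j, x i * (D 1 - D 0) i j * x j = F 1 - F 0 := by
    simp only [hF, ← Finset.sum_sub_distrib, Matrix.sub_apply]
    exact Finset.sum_congr rfl fun i _ => Finset.sum_congr rfl fun j _ => by ring
  rw [this]; linarith

/-- The matrix `M` with all entries outside `S × S` replaced by zero. -/
def padTo {V : Type*} (S : Set V) (M : Matrix V V ℝ) : Matrix V V ℝ :=
  open Classical in fun i j => if i ∈ S ∧ j ∈ S then M i j else 0

lemma padTo_posSemidef {V : Type*} [Fintype V] (S : Set V) {M : Matrix V V ℝ}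
    (hM : M.PosSemidef) : (padTo S M).PosSemidef := by
  classical
  convert hM.conjTranspose_mul_mul_same (diagonal fun i => if i ∈ S then (1 : ℝ) else 0) using 1
  ext i j
  by_cases hi : i ∈ S <;> by_cases hj : j ∈ S <;>
    simp [padTo, Matrix.mul_apply, diagonal_apply, hi, hj]

/-- `M` vanishes outside `S × S`. -/
def SupportedOn {V : Type*} (S : Set V) (M : Matrix V V ℝ) : Prop :=
  ∀ i j, i ∉ S ∨ j ∉ S → M i j = 0

lemma supportedOn_padTo {V : Type*} (S : Set V) (M : Matrix V V ℝ) :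
    SupportedOn S (padTo S M) := fun i j h => if_neg (by tauto)

lemma PosSemidef.apply_eq_zero_of_diag {V : Type*} [Fintype V] {M : Matrix V V ℝ}
    (hM : M.PosSemidef) {s : V} (hs : M s s = 0) (i : V) : M i s = 0 := by
  classical
  have h := (posSemidef_real_iff.1 (hM.submatrix ![i, s])).2
  have hsym : M s i = M i s := by simpa using hM.isHermitian.apply i s
  by_contra hne
  have h1 := h ![M i s, -(M i i + 1) / 2]
  have h2 : 0 < M i s ^ 2 := by positivity
  simp [Fin.sum_univ_two, hs, hsym] at h1
  nlinarith

/-- Subtracting the rank one part through a positive diagonal entry keeps positivity. -/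
lemma PosSemidef.sub_rankOne {V : Type*} [Fintype V] {M : Matrix V V ℝ}
    (hM : M.PosSemidef) {s : V} (hs : 0 < M s s) :
    (M - vecMulVec (fun i => M i s / √(M s s)) (fun i => M i s / √(M s s))).PosSemidef := by
  classical
  convert hM.conjTranspose_mul_mul_same
    (1 - vecMulVec (Pi.single s (1 : ℝ)) (fun i => M s i / M s s)) using 1
  have hsym : ∀ i, M s i = M i s := fun i => by simpa using hM.isHermitian.apply i s
  have hsq : √(M s s) * √(M s s) = M s s := Real.mul_self_sqrt hs.le
  ext i j
  have e1 : ∀ k, (M * (1 - vecMulVec (Pi.single s (1 : ℝ)) (fun i => M s i / M s s))) k j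
      = M k j - M k s * M j s / M s s := by
    intro k
    rw [Matrix.mul_sub, Matrix.mul_one, Matrix.mul_vecMulVec]
    simp [vecMulVec_apply, hsym, mul_div_assoc]
  rw [Matrix.mul_assoc, conjTranspose_sub, conjTranspose_one, Matrix.sub_mul, Matrix.one_mul]
  rw [Matrix.sub_apply, Matrix.sub_apply, e1]
  have e2 : ∀ N : Matrix V V ℝ, ((vecMulVec (Pi.single s (1 : ℝ)) (fun i => M s i / M s s))ᴴ * N) i j
      = M i s / M s s * N s j := by
    intro N
    simp [Matrix.mul_apply, vecMulVec_apply, Pi.single_apply, hsym]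
  rw [e2, e1, vecMulVec_apply, hsym j, div_mul_div_comm, hsq]
  field_simp
  ring

lemma posSemidef_of_supportedOn_singleton {V : Type*} [Fintype V] {M : Matrix V V ℝ} {s : V}
    (hM : SupportedOn {s} M) (hs : 0 ≤ M s s) : M.PosSemidef := by
  classical
  have h : M = diagonal (Pi.single s (M s s)) := by
    ext i j
    by_cases hi : i = s
    · subst hi
      by_cases hj : i = j
      · subst hj; simp
      · rw [diagonal_apply_ne _ hj]; exact hM _ _ (Or.inr (Ne.symm hj))
    · rw [hM _ _ (Or.inl hi), diagonal_apply]
      simp [hi]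
  rw [h]
  refine PosSemidef.diagonal fun i => ?_
  by_cases hi : i = s
  · subst hi; simpa using hs
  · simp [hi]

lemma hasDerivAt_powExt_line (b : Bool) {α : ℝ} (hα : 1 < α) (p q t : ℝ) :
    HasDerivAt (fun s => powExt b α (p + s * q)) (α * (q * powExt (!b) (α - 1) (p + t * q))) t := by
  have h1 : HasDerivAt (fun s : ℝ => p + s * q) q t := by
    simpa using ((hasDerivAt_id t).mul_const q).const_add p
  have h2 := (hasDerivAt_powExt b hα (p + t * q)).comp t h1
  have e : α * (q * powExt (!b) (α - 1) (p + t * q)) = α * powExt (!b) (α - 1) (p + t * q) * q := by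
    ring
  rw [e]; exact h2

/-- Loewner monotonicity of an entrywise power along a perturbation supported on `S`, from
positivity of the derivative on matrices supported on `S`. -/
lemma posSemidef_map_add_sub_map {V : Type*} [Fintype V] (b : Bool) {α : ℝ} (hα : 1 < α)
    {S : Set V} {P N : Matrix V V ℝ} (hP : P.PosSemidef) (hN : N.PosSemidef)
    (hNS : SupportedOn S N)
    (hg : ∀ Q : Matrix V V ℝ, Q.PosSemidef → SupportedOn S Q →
      (Q.map (powExt (!b) (α - 1))).PosSemidef) :
    ((P + N).map (powExt b α) - P.map (powExt b α)).PosSemidef := by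
  have h := posSemidef_sub_of_hasDerivAt (fun t => (P + t • N).map (powExt b α))
    (fun t => α • (N ⊙ (padTo S (P + t • N)).map (powExt (!b) (α - 1)))) ?_ ?_ ?_
  · simpa using h
  · intro t i j
    have h := hasDerivAt_powExt_line b hα (P i j) (N i j) t
    by_cases hij : i ∈ S ∧ j ∈ S
    · simpa [padTo, hij] using h
    · rw [hNS i j (by tauto)] at h
      simpa [hNS i j (by tauto)] using h
  · intro t ht
    refine (hN.hadamard (hg _ (padTo_posSemidef S ?_) (supportedOn_padTo S _))).smul (by linarith)
    exact hP.add (hN.smul ht.1.le)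
  · simp only [one_smul, zero_smul, add_zero]
    exact (isHermitian_map_s6 (hP.add hN).isHermitian _).sub (isHermitian_map_s6 hP.isHermitian _)

lemma PosSemidef.supportedOn_compl_insert {V : Type*} [Fintype V] {M : Matrix V V ℝ}
    (hM : M.PosSemidef) {s : V} (hs : M s s = 0) {T : Set V} (hT : SupportedOn Tᶜ M) :
    SupportedOn (insert s T)ᶜ M := by
  intro i j hij
  by_cases hi : i = s
  · rw [hi, ← hM.isHermitian.apply s j, star_trivial]
    exact PosSemidef.apply_eq_zero_of_diag hM hs j
  by_cases hj : j = s
  · rw [hj]; exact PosSemidef.apply_eq_zero_of_diag hM hs i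
  exact hT i j (by simpa [hi, hj] using hij)

/-- Entrywise powers `α > n - 2` preserve positivity on matrices supported on `n` indices. -/
lemma posSemidef_map_powExt {V : Type*} [Fintype V] (S : Finset V) (b : Bool) (α : ℝ)
    (hα : 0 < α) (hS : (S.card : ℝ) - 2 < α) {M : Matrix V V ℝ} (hM : M.PosSemidef)
    (hMS : SupportedOn (S : Set V) M) : (M.map (powExt b α)).PosSemidef := by
  classical
  induction S using Finset.induction_on generalizing b α M with
  | empty =>
    have : M.map (powExt b α) = 0 := by
      ext i j
      simp [hMS i j (by simp)]
    rw [this]; exact PosSemidef.zero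
  | insert s T hsT ih =>
    rw [Finset.card_insert_of_notMem hsT] at hS
    push_cast at hS
    have hsym : ∀ i, M s i = M i s := fun i => by simpa using hM.isHermitian.apply i s
    rcases (hM.diag_nonneg (i := s)).eq_or_lt with h0 | hpos
    · refine ih b α hα (by linarith) hM fun i j hij => ?_
      have h := PosSemidef.supportedOn_compl_insert (T := (↑(insert s T) : Set V)ᶜ) hM h0.symm
        (by simpa using hMS)
      exact h i j (by by_cases hi : i = s <;> by_cases hj : j = s <;> simp_all)
    set ζ : V → ℝ := fun i => M i s / √(M s s) with hζ
    set N := M - vecMulVec ζ ζ with hNdef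
    have hN : N.PosSemidef := PosSemidef.sub_rankOne hM hpos
    have hP : (vecMulVec ζ ζ).PosSemidef := posSemidef_rankOne ζ
    have hsq : √(M s s) * √(M s s) = M s s := Real.mul_self_sqrt hpos.le
    have hNapply : ∀ i j, N i j = M i j - M i s * M j s / M s s := fun i j => by
      rw [hNdef, Matrix.sub_apply, vecMulVec_apply, hζ, div_mul_div_comm, hsq]
    have hNT : SupportedOn (T : Set V) N := by
      intro i j hij
      rw [hNapply]
      by_cases hi : i = s
      · rw [hi, hsym]; field_simp; ring
      by_cases hj : j = s
      · rw [hj]; field_simp; ring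
      rw [hMS i j (by simpa [hi, hj] using hij)]
      rcases hij with h | h
      · rw [hMS i s (by left; simpa [hi] using h)]; simp
      · rw [hMS j s (by left; simpa [hj] using h)]; simp
    have hMeq : M = vecMulVec ζ ζ + N := by rw [hNdef]; abel
    have hrank : ((vecMulVec ζ ζ).map (powExt b α)).PosSemidef := by
      convert posSemidef_rankOne (fun i => powExt b α (ζ i)) using 1
      ext i j
      simp [vecMulVec_apply, powExt_mul]
    suffices h : ((vecMulVec ζ ζ + N).map (powExt b α)
        - (vecMulVec ζ ζ).map (powExt b α)).PosSemidef by
      have h' := h.add hrank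
      rwa [sub_add_cancel, ← hMeq] at h'
    rcases Nat.lt_or_ge T.card 2 with hc | hc
    · have hsub : ∀ i j, N i j = 0 → ((vecMulVec ζ ζ + N).map (powExt b α)
        - (vecMulVec ζ ζ).map (powExt b α)) i j = 0 := fun i j h => by simp [h]
      rcases Nat.eq_zero_or_pos T.card with hz | hz
      · rw [Finset.card_eq_zero] at hz
        convert PosSemidef.zero (n := V) (R := ℝ) using 1
        ext i j
        exact hsub i j (hNT i j (by simp [hz]))
      · obtain ⟨r, hr⟩ := Finset.card_eq_one.1 (show T.card = 1 by omega)
        rw [hr, Finset.coe_singleton] at hNT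
        refine posSemidef_of_supportedOn_singleton (s := r)
          (fun i j hij => hsub i j (hNT i j hij)) ?_
        simp only [Matrix.sub_apply, Matrix.map_apply, Matrix.add_apply, sub_nonneg]
        exact powExt_mono b hα.le hP.diag_nonneg (by linarith [hN.diag_nonneg (i := r)])
    · have hc' : (2 : ℝ) ≤ T.card := by exact_mod_cast hc
      exact posSemidef_map_add_sub_map b (by linarith) hP hN hNT fun Q hQ hQT =>
        ih (!b) (α - 1) (by linarith) (by linarith) hQ hQT

/-- Entrywise powers `α ≥ n` are Loewner superadditive on positive semidefinite matrices
supported on `n` indices. -/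
lemma posSemidef_map_add_sub {V : Type*} [Fintype V] (S : Finset V) (b : Bool) (α : ℝ)
    (hS : (S.card : ℝ) ≤ α) {P N : Matrix V V ℝ} (hP : P.PosSemidef)
    (hN : N.PosSemidef) (hPS : SupportedOn (S : Set V) P) (hNS : SupportedOn (S : Set V) N) :
    ((P + N).map (powExt b α) - P.map (powExt b α) - N.map (powExt b α)).PosSemidef := by
  have hsupp : ∀ β, SupportedOn (S : Set V)
      ((P + N).map (powExt b β) - P.map (powExt b β) - N.map (powExt b β)) := fun β i j hij => by
    simp [hPS i j hij, hNS i j hij]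
  have hherm : ∀ β, ((P + N).map (powExt b β) - P.map (powExt b β)
      - N.map (powExt b β)).IsHermitian := fun β =>
    ((isHermitian_map_s6 (hP.add hN).isHermitian _).sub (isHermitian_map_s6 hP.isHermitian _)).sub
      (isHermitian_map_s6 hN.isHermitian _)
  rcases Nat.lt_or_ge S.card 2 with hc | hc
  · rcases Nat.eq_zero_or_pos S.card with hz | hz
    · rw [Finset.card_eq_zero] at hz
      convert PosSemidef.zero (n := V) (R := ℝ) using 1
      ext i j
      exact hsupp α i j (by simp [hz])
    · have h1 : S.card = 1 := by omega
      obtain ⟨r, hr⟩ := Finset.card_eq_one.1 h1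
      rw [h1] at hS
      refine posSemidef_of_supportedOn_singleton (s := r) (by simpa [hr] using hsupp α) ?_
      have := powExt_superadditive b (by simpa using hS) (hP.diag_nonneg (i := r))
        (hN.diag_nonneg (i := r))
      simp only [Matrix.sub_apply, Matrix.map_apply, Matrix.add_apply]
      linarith
  have hc' : (2 : ℝ) ≤ S.card := by exact_mod_cast hc
  have key : ∀ β : ℝ, (S.card : ℝ) < β →
      ((P + N).map (powExt b β) - P.map (powExt b β) - N.map (powExt b β)).PosSemidef := by
    intro β hβ
    have h := posSemidef_sub_of_hasDerivAt
      (fun t => (P + t • N).map (powExt b β) - (t • N).map (powExt b β))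
      (fun t => β • (N ⊙ ((t • N + P).map (powExt (!b) (β - 1))
        - (t • N).map (powExt (!b) (β - 1))))) ?_ ?_ ?_
    · convert h using 1
      ext i j
      simp
      ring
    · intro t i j
      have h1 := hasDerivAt_powExt_line b (by linarith) (P i j) (N i j) t (α := β)
      have h2 := hasDerivAt_powExt_line b (by linarith) 0 (N i j) t (α := β)
      have h3 := h1.fun_sub h2
      simp only [zero_add, ← mul_sub] at h3
      simpa [add_comm] using h3
    · intro t ht
      have htN := hN.smul ht.1.le
      refine (hN.hadamard ?_).smul (by linarith)
      refine posSemidef_map_add_sub_map (S := (S : Set V)) (!b) (by linarith) htN hP hPS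
        fun Q hQ hQS => ?_
      exact posSemidef_map_powExt S _ _ (by linarith) (by linarith) hQ hQS
    · convert hherm β using 1
      ext i j
      simp
      ring
  refine posSemidef_real_iff.2 ⟨hherm α, fun x => ?_⟩
  have hcont : Continuous fun β => ∑ i, ∑ j, x i *
      ((P + N).map (powExt b β) - P.map (powExt b β) - N.map (powExt b β)) i j * x j := by
    refine continuous_finsetSum _ fun i _ => continuous_finsetSum _ fun j _ => ?_
    simp only [Matrix.sub_apply, Matrix.map_apply]
    exact (continuous_const.mul (((continuous_powExt_exponent b _).sub
      (continuous_powExt_exponent b _)).sub (continuous_powExt_exponent b _))).mul continuous_const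
  refine ge_of_tendsto (hcont.continuousAt.tendsto.mono_left
    (nhdsWithin_le_nhds (s := Ioi α))) ?_
  filter_upwards [self_mem_nhdsWithin] with β hβ
  exact (posSemidef_real_iff.1 (key β (lt_of_le_of_lt hS hβ))).2 x

/-- A positive semidefinite matrix with vanishing `A × B` block is a sum of positive semidefinite
matrices supported on the complements of `B` and of `A`. -/
lemma exists_posSemidef_add_of_block_zero {V : Type*} [Fintype V] (A : Finset V) (B : Set V)
    (hAB : Disjoint (A : Set V) B) {M : Matrix V V ℝ} (hM : M.PosSemidef)
    (h0 : ∀ i ∈ A, ∀ j ∈ B, M i j = 0) :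
    ∃ M₁ M₂ : Matrix V V ℝ, M = M₁ + M₂ ∧ M₁.PosSemidef ∧ M₂.PosSemidef ∧
      SupportedOn Bᶜ M₁ ∧ SupportedOn (A : Set V)ᶜ M₂ := by
  classical
  induction A using Finset.induction_on generalizing M with
  | empty => exact ⟨0, M, by simp, PosSemidef.zero, hM, fun _ _ _ => rfl, fun i j h => by simp at h⟩
  | insert s T hsT ih =>
    rw [Finset.coe_insert, Set.disjoint_insert_left] at hAB
    have hsym : ∀ i j, M j i = M i j := fun i j => by simpa using hM.isHermitian.apply i j
    rcases (hM.diag_nonneg (i := s)).eq_or_lt with hz | hpos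
    · obtain ⟨M₁, M₂, hadd, hM₁, hM₂, hs₁, hs₂⟩ := ih hAB.2 hM
        fun i hi j hj => h0 i (Finset.mem_insert_of_mem hi) j hj
      refine ⟨M₁, M₂, hadd, hM₁, hM₂, hs₁, ?_⟩
      have hss : M₂ s s = 0 := by
        have h := congrFun (congrFun hadd s) s
        rw [← hz, Matrix.add_apply] at h
        linarith [hM₁.diag_nonneg (i := s), hM₂.diag_nonneg (i := s)]
      rw [Finset.coe_insert]
      exact PosSemidef.supportedOn_compl_insert hM₂ hss hs₂
    set ζ : V → ℝ := fun i => M i s / √(M s s) with hζ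
    set N := M - vecMulVec ζ ζ with hNdef
    have hN : N.PosSemidef := PosSemidef.sub_rankOne hM hpos
    have hP : (vecMulVec ζ ζ).PosSemidef := posSemidef_rankOne ζ
    have hζB : ∀ j ∈ B, ζ j = 0 := fun j hj => by
      simp [hζ, hsym s j, h0 s (Finset.mem_insert_self s T) j hj]
    have hsq : √(M s s) * √(M s s) = M s s := Real.mul_self_sqrt hpos.le
    have hNs : ∀ i, N i s = 0 := fun i => by
      rw [hNdef, Matrix.sub_apply, vecMulVec_apply, hζ, div_mul_div_comm, hsq]
      field_simp
      ring
    obtain ⟨M₁, M₂, hadd, hM₁, hM₂, hs₁, hs₂⟩ := ih hAB.2 hN fun i hi j hj => by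
      simp [hNdef, h0 i (Finset.mem_insert_of_mem hi) j hj, vecMulVec_apply, hζB j hj]
    refine ⟨vecMulVec ζ ζ + M₁, M₂, ?_, hP.add hM₁, hM₂, fun i j hij => ?_, ?_⟩
    · rw [add_assoc, ← hadd, hNdef]; abel
    · rw [Matrix.add_apply, hs₁ i j hij, vecMulVec_apply]
      rcases hij with h | h
      · rw [hζB i (by simpa using h)]; simp
      · rw [hζB j (by simpa using h)]; simp
    · have hss : M₂ s s = 0 := by
        have h := congrFun (congrFun hadd s) s
        rw [hNs, Matrix.add_apply] at h
        linarith [hM₁.diag_nonneg (i := s), hM₂.diag_nonneg (i := s)]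
      rw [Finset.coe_insert]
      exact PosSemidef.supportedOn_compl_insert hM₂ hss hs₂

lemma powExt_natCast (b : Bool) {d : ℕ} (hd : 0 < d) (hb : (-1) ^ d = paritySign b) (x : ℝ) :
    powExt b d x = x ^ d := by
  rcases lt_trichotomy x 0 with hx | rfl | hx
  · have h := powExt_neg b d (-x)
    rw [neg_neg, powExt_of_pos b d (neg_pos.2 hx), Real.rpow_natCast, ← hb, ← mul_pow] at h
    simpa using h
  · simp [hd.ne']
  · rw [powExt_of_pos b d hx, Real.rpow_natCast]

/-- If an extended power function agrees with a polynomial then it is a monomial. -/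
lemma exists_nat_of_powExt_eq_eval (b : Bool) {α : ℝ} (hα : 0 < α) (p : Polynomial ℝ)
    (hp : ∀ x, powExt b α x = p.eval x) :
    ∃ d : ℕ, 0 < d ∧ α = d ∧ (-1) ^ d = paritySign b := by
  have hp0 : p ≠ 0 := by
    rintro rfl
    simpa using hp 1
  have key : ∀ c : ℝ, powExt b α c = c ^ p.natDegree := by
    intro c
    have hpoly : p.comp (Polynomial.C c * Polynomial.X) = Polynomial.C (powExt b α c) * p := by
      refine Polynomial.funext fun x => ?_
      simp [Polynomial.eval_comp, ← hp, powExt_mul]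
    have hcoeff := congrArg (fun q => Polynomial.coeff q p.natDegree) hpoly
    simp only [Polynomial.comp_C_mul_X_coeff, Polynomial.coeff_C_mul] at hcoeff
    have hl : p.coeff p.natDegree ≠ 0 := by simpa using hp0
    exact (mul_left_cancel₀ hl (by linarith)).symm
  have hd : α = p.natDegree := by
    have h2 := key 2
    rw [powExt_of_pos b α two_pos, ← Real.rpow_natCast] at h2
    exact (Real.rpow_right_inj two_pos (by norm_num)).1 h2
  refine ⟨p.natDegree, ?_, hd, ?_⟩
  · rw [hd] at hα; exact_mod_cast hα
  · rw [← key, powExt_neg, powExt_one, mul_one]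

/-- A function that is not polynomial is detected by a functional on `m + 1` points which
annihilates the monomials of degrees `1, …, m`. -/
lemma exists_weights_annihilating_monomials (m : ℕ) (g : ℝ → ℝ) (hg0 : g 0 = 0)
    (hg : ¬ ∃ p : Polynomial ℝ, ∀ x, g x = p.eval x) :
    ∃ x w : Fin (m + 1) → ℝ, (∀ k, 1 ≤ k → k ≤ m → ∑ i, w i * x i ^ k = 0) ∧
      ∑ i, w i * g (x i) ≠ 0 := by
  set s := Finset.range (m + 1) with hs
  set v : ℕ → ℝ := fun i => (i : ℝ) with hv
  have hinj : Set.InjOn v s := fun i _ j _ h => Nat.cast_injective h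
  have heval : ∀ (q : ℝ → ℝ) (y : ℝ), q 0 = 0 →
      (Lagrange.interpolate s v fun i => q (v i)).eval y =
        ∑ i : Fin m, q ((i : ℕ) + 1) * (Lagrange.basis s v ((i : ℕ) + 1)).eval y := by
    intro q y hq
    rw [Lagrange.interpolate_apply, Polynomial.eval_finsetSum, hs, Finset.sum_range_succ',
      Finset.sum_range]
    simp [hv, hq]
  obtain ⟨y, hy⟩ : ∃ y, g y ≠ (Lagrange.interpolate s v fun i => g (v i)).eval y := by
    by_contra! h
    exact hg ⟨_, h⟩
  refine ⟨Fin.cons y fun i : Fin m => ((i : ℕ) : ℝ) + 1,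
    Fin.cons 1 fun i : Fin m => -(Lagrange.basis s v ((i : ℕ) + 1)).eval y, ?_, ?_⟩
  · intro k hk1 hkm
    have hX := Lagrange.eq_interpolate (s := s) (v := v) (f := (Polynomial.X : Polynomial ℝ) ^ k)
      hinj (by
        rw [Polynomial.degree_X_pow, hs, Finset.card_range]
        exact_mod_cast Nat.lt_succ_of_le hkm)
    have h := congrArg (Polynomial.eval y) hX
    simp only [Polynomial.eval_pow, Polynomial.eval_X] at h
    rw [heval (fun z => z ^ k) y (zero_pow (by omega))] at h
    rw [Fin.sum_univ_succ]
    simp only [Fin.cons_zero, Fin.cons_succ, neg_mul, Finset.sum_neg_distrib, one_mul]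
    rw [h, ← sub_eq_add_neg, sub_eq_zero]
    exact Finset.sum_congr rfl fun i _ => mul_comm _ _
  · rw [heval g y hg0] at hy
    rw [Fin.sum_univ_succ]
    simp only [Fin.cons_zero, Fin.cons_succ, neg_mul, Finset.sum_neg_distrib, one_mul]
    rw [← sub_eq_add_neg, sub_ne_zero]
    convert hy using 1
    exact Finset.sum_congr rfl fun i _ => mul_comm _ _

open Topology Asymptotics Filter in
lemma one_add_rpow_taylor (α : ℝ) (n : ℕ) :
    ∃ c : ℕ → ℝ, c 0 = 1 ∧
      (fun y : ℝ => (1 + y) ^ α - ∑ k ∈ Finset.range n, c k * y ^ k) =O[𝓝 0] fun y => y ^ n := by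
  have hq := Real.one_add_rpow_hasFPowerSeriesAt_zero (a := α)
  set q := binomialSeries ℝ α
  refine ⟨fun k => q.coeff k, ?_, ?_⟩
  · have h := hq.coeff_zero 1
    rw [add_zero, Real.one_rpow] at h
    exact h
  · have h := hq.isBigO_sub_partialSum_pow n
    simp only [zero_add, FormalMultilinearSeries.partialSum,
      FormalMultilinearSeries.apply_eq_pow_smul_coeff, smul_eq_mul] at h
    simp only [mul_comm (q.coeff _)]
    exact h.trans (isBigO_of_le _ fun y => by simp)

open Topology Asymptotics Filter in
/-- The power `α < m + 1` is not superadditive along `1 + t x xᵀ` in a direction annihilating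
the monomials of degrees `1, …, m`. -/
lemma exists_pos_not_superadditive {ι : Type*} [Fintype ι] (b : Bool) {α : ℝ} {m : ℕ}
    (hα : α < m + 1) (x w : ι → ℝ) (hw : ∀ k, 1 ≤ k → k ≤ m → ∑ i, w i * x i ^ k = 0)
    (hg : ∑ i, w i * powExt b α (x i) ≠ 0) :
    ∃ t : ℝ, 0 < t ∧ ∑ i, ∑ j, w i * powExt b α (1 + t * (x i * x j)) * w j <
      (∑ i, w i) ^ 2 + t ^ α * (∑ i, w i * powExt b α (x i)) ^ 2 := by
  obtain ⟨c, hc0, hc⟩ := one_add_rpow_taylor α (m + 1)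
  set R : ℝ → ℝ := fun y => (1 + y) ^ α - ∑ k ∈ Finset.range (m + 1), c k * y ^ k with hR
  set S := ∑ i, w i * powExt b α (x i) with hS
  have hlin : ∀ a : ℝ, Tendsto (fun t : ℝ => t * a) (𝓝[>] 0) (𝓝 0) := fun a => by
    have : Tendsto (fun t : ℝ => t * a) (𝓝 0) (𝓝 (0 * a)) := (continuous_mul_const a).tendsto 0
    rw [zero_mul] at this
    exact this.mono_left nhdsWithin_le_nhds
  have hpow : (fun t : ℝ => t ^ (m + 1)) =o[𝓝[>] 0] fun t => t ^ α := by
    have h1 : Tendsto (fun t : ℝ => t ^ ((m : ℝ) + 1 - α)) (𝓝[>] 0) (𝓝 0) := by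
      have := (Real.continuousAt_rpow_const 0 ((m : ℝ) + 1 - α) (Or.inr (by linarith))).tendsto
      rw [Real.zero_rpow (by linarith)] at this
      exact this.mono_left nhdsWithin_le_nhds
    refine (isLittleO_of_tendsto' ?_ (h1.congr' ?_))
    · filter_upwards [self_mem_nhdsWithin] with t ht h
      exact absurd h (Real.rpow_pos_of_pos ht α).ne'
    · filter_upwards [self_mem_nhdsWithin] with t ht
      rw [Real.rpow_sub ht]
      congr 1
      exact_mod_cast Real.rpow_natCast t (m + 1)
  have hRo : ∀ a : ℝ, (fun t : ℝ => R (t * a)) =o[𝓝[>] 0] fun t => t ^ α := fun a => by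
    refine ((hc.comp_tendsto (hlin a)).trans ?_).trans_isLittleO hpow
    refine IsBigO.of_bound (‖a ^ (m + 1)‖) (Eventually.of_forall fun t => ?_)
    simp only [Function.comp_apply, mul_pow, norm_mul]
    rw [mul_comm]
  have hsum : (fun t : ℝ => ∑ i, ∑ j, w i * w j * R (t * (x i * x j))) =o[𝓝[>] 0]
      fun t => t ^ α :=
    IsLittleO.fun_sum fun i _ => IsLittleO.fun_sum fun j _ => (hRo _).const_mul_left _
  have hSpos : 0 < S ^ 2 := by positivity
  have hev := hsum.def (show 0 < S ^ 2 / 2 by positivity)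
  have hbase : ∀ᶠ t : ℝ in 𝓝[>] 0, ∀ i j, 0 < 1 + t * (x i * x j) := by
    refine eventually_all.2 fun i => eventually_all.2 fun j => ?_
    filter_upwards [(hlin (x i * x j)).eventually (lt_mem_nhds (show (-1 : ℝ) < 0 by norm_num))]
      with t ht
    linarith
  obtain ⟨t, ht1, ht2, ht0⟩ := (hev.and (hbase.and self_mem_nhdsWithin)).exists
  have ht0 : 0 < t := ht0
  refine ⟨t, ht0, ?_⟩
  have hmom : ∀ k, ∑ i, ∑ j, w i * w j * (x i * x j) ^ k = (∑ i, w i * x i ^ k) ^ 2 := fun k => by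
    rw [sq, Finset.sum_mul_sum]
    exact Finset.sum_congr rfl fun i _ => Finset.sum_congr rfl fun j _ => by ring
  have hmain : ∑ i, ∑ j, w i * w j * ∑ k ∈ Finset.range (m + 1), c k * (t * (x i * x j)) ^ k
      = (∑ i, w i) ^ 2 := by
    have hswap : ∑ i, ∑ j, w i * w j * ∑ k ∈ Finset.range (m + 1), c k * (t * (x i * x j)) ^ k
        = ∑ k ∈ Finset.range (m + 1), c k * t ^ k * (∑ i, w i * x i ^ k) ^ 2 := by
      simp only [← hmom, Finset.mul_sum]
      rw [Finset.sum_comm' (t' := Finset.univ) (s' := fun _ => Finset.range (m + 1))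
        (by simp [and_comm])]
      refine Finset.sum_congr rfl fun i _ => ?_
      rw [Finset.sum_comm]
      exact Finset.sum_congr rfl fun j _ => Finset.sum_congr rfl fun k _ => by ring
    rw [hswap, Finset.sum_range_succ', Finset.sum_eq_zero]
    · simp [hc0]
    · intro k hk
      rw [hw (k + 1) (by omega) (by simpa using hk)]
      simp
  have hsplit : ∑ i, ∑ j, w i * powExt b α (1 + t * (x i * x j)) * w j
      = ∑ i, ∑ j, w i * w j * R (t * (x i * x j)) + (∑ i, w i) ^ 2 := by
    rw [← hmain, ← Finset.sum_add_distrib]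
    refine Finset.sum_congr rfl fun i _ => ?_
    rw [← Finset.sum_add_distrib]
    refine Finset.sum_congr rfl fun j _ => ?_
    rw [powExt_of_pos b α (ht2 i j), hR]
    ring
  have htα : 0 < t ^ α := Real.rpow_pos_of_pos ht0 α
  rw [Real.norm_eq_abs, Real.norm_eq_abs, abs_of_pos htα] at ht1
  have := le_of_abs_le ht1
  rw [hsplit]
  nlinarith [mul_pos htα hSpos]

/-- A rank one matrix on a clique together with a vertex adjacent to it has the zero pattern of
the graph. -/
lemma mul_eq_zero_of_not_adj {V : Type*} [DecidableEq V] {G : SimpleGraph V} {C : Set V}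
    (hC : ∀ c₁ ∈ C, ∀ c₂ ∈ C, c₁ ≠ c₂ → G.Adj c₁ c₂) {v : V} (hv : ∀ c ∈ C, G.Adj v c)
    {u : V → ℝ} (hu : ∀ i ∉ C, u i = 0) {i j : V} (hij : i ≠ j) (hadj : ¬ G.Adj i j) :
    (Pi.single v 1 + u : V → ℝ) i * (Pi.single v 1 + u : V → ℝ) j = 0 := by
  by_contra hne
  obtain ⟨hi, hj⟩ := mul_ne_zero_iff.1 hne
  have hmem : ∀ k, (Pi.single v 1 + u : V → ℝ) k ≠ 0 → k = v ∨ k ∈ C := by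
    intro k hk
    by_contra! h
    exact hk (by simp [h.1, hu k h.2])
  rcases hmem i hi with rfl | hiC <;> rcases hmem j hj with rfl | hjC
  · exact hij rfl
  · exact hadj (hv j hjC)
  · exact hadj (hv i hiC).symm
  · exact hadj (hC i hiC j hjC hij)

lemma sum_sum_rankOne {V : Type*} [Fintype V] (z r : V → ℝ) :
    ∑ i, ∑ j, z i * (r i * r j) * z j = (∑ i, z i * r i) ^ 2 := by
  rw [sq, Finset.sum_mul_sum]
  exact Finset.sum_congr rfl fun i _ => Finset.sum_congr rfl fun j _ => by ring

/-- If an extended power preserves positivity on `P_G`, it is superadditive on rank one matrices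
supported on the separating clique. -/
lemma superadditive_of_preserves {V : Type*} [Fintype V] {G : SimpleGraph V} {C : Set V}
    (hC : ∀ c₁ ∈ C, ∀ c₂ ∈ C, c₁ ≠ c₂ → G.Adj c₁ c₂) {v₁ v₂ : V} (hv₁ : v₁ ∉ C) (hv₂ : v₂ ∉ C)
    (hne : v₁ ≠ v₂) (h₁ : ∀ c ∈ C, G.Adj v₁ c) (h₂ : ∀ c ∈ C, G.Adj v₂ c) (b : Bool) (α : ℝ)
    (hpres : ∀ M ∈ PsetG G univ, (M.map (powExt b α)).PosSemidef) (u v w : V → ℝ)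
    (hu : ∀ i ∉ C, u i = 0) (hv : ∀ i ∉ C, v i = 0) :
    (∑ i, w i * powExt b α (u i)) ^ 2 + (∑ i, w i * powExt b α (v i)) ^ 2 ≤
      ∑ i, ∑ j, w i * powExt b α (u i * u j + v i * v j) * w j := by
  classical
  set f := powExt b α with hf
  set p : V → ℝ := Pi.single v₁ 1 + u with hp
  set q : V → ℝ := Pi.single v₂ 1 + v with hq
  have hmem : vecMulVec p p + vecMulVec q q ∈ PsetG G univ := by
    refine ⟨(posSemidef_rankOne p).add (posSemidef_rankOne q), by simp, fun i j hij hadj => ?_⟩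
    rw [Matrix.add_apply, vecMulVec_apply, vecMulVec_apply,
      mul_eq_zero_of_not_adj hC h₁ hu hij hadj, mul_eq_zero_of_not_adj hC h₂ hv hij hadj, add_zero]
  set a := ∑ i, w i * f (u i) with ha
  set c := ∑ i, w i * f (v i) with hc
  set z : V → ℝ := fun i => if i = v₁ then -a else if i = v₂ then -c else w i with hz
  have hform := (posSemidef_real_iff.1 (hpres _ hmem)).2 z
  have hentry : ∀ i j, f (p i * p j + q i * q j) = f (u i * u j + v i * v j)
      + ((Pi.single v₁ 1 + f ∘ u : V → ℝ) i * (Pi.single v₁ 1 + f ∘ u : V → ℝ) j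
        - f (u i) * f (u j))
      + ((Pi.single v₂ 1 + f ∘ v : V → ℝ) i * (Pi.single v₂ 1 + f ∘ v : V → ℝ) j
        - f (v i) * f (v j)) := by
    have hcases : ∀ k : V,
        (u k = 0 ∧ v k = 0 ∧ (Pi.single v₁ 1 : V → ℝ) k = 1 ∧ (Pi.single v₂ 1 : V → ℝ) k = 0) ∨
        (u k = 0 ∧ v k = 0 ∧ (Pi.single v₁ 1 : V → ℝ) k = 0 ∧ (Pi.single v₂ 1 : V → ℝ) k = 1) ∨
        ((Pi.single v₁ 1 : V → ℝ) k = 0 ∧ (Pi.single v₂ 1 : V → ℝ) k = 0) := by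
      intro k
      by_cases hk₁ : k = v₁
      · subst hk₁; simp [hu _ hv₁, hv _ hv₁, hne]
      by_cases hk₂ : k = v₂
      · subst hk₂; simp [hu _ hv₂, hv _ hv₂, hne.symm]
      simp [hk₁, hk₂]
    intro i j
    simp only [hp, hq, Pi.add_apply, Function.comp_apply]
    rcases hcases i with ⟨e1, e2, e3, e4⟩ | ⟨e1, e2, e3, e4⟩ | ⟨e3, e4⟩ <;>
      rcases hcases j with ⟨d1, d2, d3, d4⟩ | ⟨d1, d2, d3, d4⟩ | ⟨d3, d4⟩ <;>
      simp only [*] <;> simp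
  have hzK : ∀ i j, z i * f (u i * u j + v i * v j) * z j
      = w i * f (u i * u j + v i * v j) * w j := by
    intro i j
    have hvan : ∀ k, k = v₁ ∨ k = v₂ → u k = 0 ∧ v k = 0 := by
      rintro k (rfl | rfl)
      exacts [⟨hu _ hv₁, hv _ hv₁⟩, ⟨hu _ hv₂, hv _ hv₂⟩]
    by_cases hi : i = v₁ ∨ i = v₂
    · simp [hf, hvan i hi]
    by_cases hj : j = v₁ ∨ j = v₂
    · simp [hf, hvan j hj]
    rw [not_or] at hi hj
    simp [hz, hi, hj]
  have hdot : ∀ g : V → ℝ, g v₁ = 0 → g v₂ = 0 → ∑ i, z i * g i = ∑ i, w i * g i := by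
    intro g hg₁ hg₂
    refine Finset.sum_congr rfl fun i _ => ?_
    by_cases hi₁ : i = v₁
    · simp [hi₁, hg₁]
    by_cases hi₂ : i = v₂
    · simp [hi₂, hg₂]
    simp [hz, hi₁, hi₂]
  have hza : ∑ i, z i * f (u i) = a := hdot (fun i => f (u i)) (by simp [hf, hu _ hv₁])
    (by simp [hf, hu _ hv₂])
  have hzc : ∑ i, z i * f (v i) = c := hdot (fun i => f (v i)) (by simp [hf, hv _ hv₁])
    (by simp [hf, hv _ hv₂])
  have hzp : ∑ i, z i * (Pi.single v₁ 1 + f ∘ u : V → ℝ) i = 0 := by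
    simp only [Pi.add_apply, mul_add, Finset.sum_add_distrib, Function.comp_apply, hza]
    simp [Pi.single_apply, hz]
  have hzq : ∑ i, z i * (Pi.single v₂ 1 + f ∘ v : V → ℝ) i = 0 := by
    simp only [Pi.add_apply, mul_add, Finset.sum_add_distrib, Function.comp_apply, hzc]
    simp [Pi.single_apply, hz, hne.symm]
  have hexp : ∑ i, ∑ j, z i * f (p i * p j + q i * q j) * z j
      = ∑ i, ∑ j, w i * f (u i * u j + v i * v j) * w j
        + ((∑ i, z i * (Pi.single v₁ 1 + f ∘ u : V → ℝ) i) ^ 2 - (∑ i, z i * f (u i)) ^ 2)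
        + ((∑ i, z i * (Pi.single v₂ 1 + f ∘ v : V → ℝ) i) ^ 2 - (∑ i, z i * f (v i)) ^ 2) := by
    rw [← sum_sum_rankOne, ← sum_sum_rankOne, ← sum_sum_rankOne, ← sum_sum_rankOne]
    simp only [← Finset.sum_add_distrib, ← Finset.sum_sub_distrib]
    refine Finset.sum_congr rfl fun i _ => Finset.sum_congr rfl fun j _ => ?_
    rw [hentry]
    linear_combination hzK i j
  simp only [Matrix.map_apply, Matrix.add_apply, vecMulVec_apply] at hform
  rw [hexp, hzp, hzq, hza, hzc] at hform
  linarith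

/-- The superadditivity inequality for vectors indexed by a family of vertices of the clique. -/
lemma superadditive_of_preserves_embedding {V ι : Type*} [Fintype V] [Fintype ι]
    {G : SimpleGraph V} {C : Set V}
    (hC : ∀ c₁ ∈ C, ∀ c₂ ∈ C, c₁ ≠ c₂ → G.Adj c₁ c₂) {v₁ v₂ : V} (hv₁ : v₁ ∉ C) (hv₂ : v₂ ∉ C)
    (hne : v₁ ≠ v₂) (h₁ : ∀ c ∈ C, G.Adj v₁ c) (h₂ : ∀ c ∈ C, G.Adj v₂ c) (b : Bool) (α : ℝ)
    (hpres : ∀ M ∈ PsetG G univ, (M.map (powExt b α)).PosSemidef) (e : ι ↪ V)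
    (he : ∀ i, e i ∈ C) (u v w : ι → ℝ) :
    (∑ i, w i * powExt b α (u i)) ^ 2 + (∑ i, w i * powExt b α (v i)) ^ 2 ≤
      ∑ i, ∑ j, w i * powExt b α (u i * u j + v i * v j) * w j := by
  have hz : ∀ (r : ι → ℝ) (i : V), i ∉ Set.range e → Function.extend e r 0 i = 0 :=
    fun r i hi => Function.extend_apply' _ _ _ (by simpa using hi)
  have hzC : ∀ (r : ι → ℝ), ∀ i ∉ C, Function.extend e r 0 i = 0 :=
    fun r i hi => hz r i (by rintro ⟨k, rfl⟩; exact hi (he k))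
  have h := superadditive_of_preserves hC hv₁ hv₂ hne h₁ h₂ b α hpres (Function.extend e u 0)
    (Function.extend e v 0) (Function.extend e w 0) (hzC u) (hzC v)
  have hx : ∀ (r : ι → ℝ) (i : ι), Function.extend e r 0 (e i) = r i :=
    fun r i => e.injective.extend_apply r 0 i
  have hsum : ∀ g : V → ℝ, (∀ i ∉ Set.range e, g i = 0) → ∑ i, g i = ∑ i, g (e i) :=
    fun g hg => (Fintype.sum_of_injective e e.injective _ g hg fun _ => rfl).symm
  rw [hsum _ fun i hi => by simp [hz w i hi], hsum _ fun i hi => by simp [hz w i hi],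
    hsum _ fun i hi => by simp [hz w i hi]] at h
  simp only [hx] at h
  convert h using 2
  rw [hsum _ fun i hi => by simp [hz w i hi]]
  simp only [hx]

lemma posSemidef_map_pow {V : Type*} [Fintype V] {M : Matrix V V ℝ} (hM : M.PosSemidef) {d : ℕ}
    (hd : 0 < d) : (M.map (· ^ d)).PosSemidef := by
  induction d, hd using Nat.le_induction with
  | base => simpa using hM
  | succ d _ ih =>
    have h : M.map (· ^ (d + 1)) = M.map (· ^ d) ⊙ M := by
      ext i j
      simp [pow_succ]
    rw [h]
    exact ih.hadamard hM

lemma not_adj_of_isDecomposition {V : Type*} {G : SimpleGraph V} {A C B : Set V}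
    (hdec : IsDecomposition G A C B) {i j : V} (hi : i ∈ A) (hj : j ∈ B) : ¬ G.Adj i j := by
  obtain ⟨-, hAC, -, hCB, hsep, -⟩ := hdec
  intro hadj
  obtain ⟨c, hc, hmem⟩ := hsep i hi j hj hadj.toWalk
  simp only [SimpleGraph.Adj.toWalk, SimpleGraph.Walk.support_cons, SimpleGraph.Walk.support_nil,
    List.mem_cons, List.not_mem_nil, or_false] at hmem
  rcases hmem with rfl | rfl
  · exact hAC.notMem_of_mem_left hi hc
  · exact hCB.notMem_of_mem_left hc hj

/-- Negative exponents do not preserve positivity in the presence of an edge. -/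
lemma nonneg_exponent_of_preserves {V : Type*} [Fintype V] {G : SimpleGraph V} {S : Set V}
    {i j : V} (hadj : G.Adj i j) (hi : i ∈ S) (hj : j ∈ S) (b : Bool) {α : ℝ}
    (hpres : ∀ M ∈ PsetSub G S, (M.map (powExt b α)).PosSemidef) : 0 ≤ α := by
  classical
  by_contra! hα
  have hij : i ≠ j := hadj.ne
  set e : V → V → ℝ := fun k => Pi.single k 1 with he
  set M : Matrix V V ℝ := (1 / 2 : ℝ) • (vecMulVec (e i) (e i) + vecMulVec (e j) (e j)
    + vecMulVec (e i + e j) (e i + e j)) with hMdef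
  have hM : M.PosSemidef := (((posSemidef_rankOne (e i)).add (posSemidef_rankOne (e j))).add
    (posSemidef_rankOne (e i + e j))).smul (by norm_num)
  have hMapply : ∀ k l, M k l = 1 / 2 * (e i k * e i l + e j k * e j l
      + (e i k + e j k) * (e i l + e j l)) := fun k l => by
    simp [hMdef, vecMulVec_apply]
    ring
  have hout : ∀ k, k ≠ i → k ≠ j → e i k = 0 ∧ e j k = 0 := fun k hki hkj => by simp [he, hki, hkj]
  have hmem : M ∈ PsetSub G S := by
    refine ⟨hM, fun k l hkl => ?_, fun k l hkl hkladj => ?_⟩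
    · rw [hMapply]
      rcases hkl with h | h
      · have h' := hout k (fun e => h (e ▸ hi)) fun e => h (e ▸ hj)
        simp [h']
      · have h' := hout l (fun e => h (e ▸ hi)) fun e => h (e ▸ hj)
        simp [h']
    · rw [hMapply]
      by_cases hk : k ≠ i ∧ k ≠ j
      · simp [hout k hk.1 hk.2]
      by_cases hl : l ≠ i ∧ l ≠ j
      · simp [hout l hl.1 hl.2]
      have hk' : k = i ∨ k = j := by tauto
      have hl' : l = i ∨ l = j := by tauto
      rcases hk' with rfl | rfl <;> rcases hl' with rfl | rfl
      · exact absurd rfl hkl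
      · exact absurd hadj hkladj
      · exact absurd hadj.symm hkladj
      · exact absurd rfl hkl
  have hform := (posSemidef_real_iff.1 ((hpres M hmem).submatrix ![i, j])).2 ![1, -1]
  have hii : M i i = 1 := by rw [hMapply]; simp [he, hij]; norm_num
  have hjj : M j j = 1 := by rw [hMapply]; simp [he, hij.symm]; norm_num
  have hoff : M i j = 1 / 2 := by rw [hMapply]; simp [he, hij, hij.symm]
  have hoff' : M j i = 1 / 2 := by rw [hMapply]; simp [he, hij, hij.symm]
  have hbig : 1 < (1 / 2 : ℝ) ^ α :=
    Real.one_lt_rpow_of_pos_of_lt_one_of_neg (by norm_num) (by norm_num) hα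
  simp only [Fin.sum_univ_two, Matrix.submatrix_apply, Matrix.map_apply, Matrix.cons_val_zero,
    Matrix.cons_val_one, hii, hjj, hoff, hoff', powExt_one,
    powExt_of_pos b α (show (0 : ℝ) < 1 / 2 by norm_num)] at hform
  linarith

lemma preserves_of_superadditive {V : Type*} [Fintype V] {G : SimpleGraph V} {A C B : Set V}
    (hdec : IsDecomposition G A C B) (b : Bool) {α : ℝ} (hα : C.Nonempty → (C.ncard : ℝ) ≤ α)
    (hA : ∀ M ∈ PsetSub G (A ∪ C), (M.map (powExt b α)).PosSemidef)
    (hB : ∀ M ∈ PsetSub G (B ∪ C), (M.map (powExt b α)).PosSemidef) :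
    ∀ M ∈ PsetG G univ, (M.map (powExt b α)).PosSemidef := by
  classical
  intro M hM
  obtain ⟨hM, -, hpat⟩ := hM
  have hdec' := hdec
  obtain ⟨hcover, hAC, hAB, hCB, -, hclique⟩ := hdec'
  obtain ⟨M₁, M₂, hadd, hM₁, hM₂, hs₁, hs₂⟩ := exists_posSemidef_add_of_block_zero A.toFinset B
    (by simpa using hAB) hM fun i hi j hj => by
      rw [Set.mem_toFinset] at hi
      exact hpat i j (hAB.ne_of_mem hi hj) (not_adj_of_isDecomposition hdec hi hj)
  rw [Set.coe_toFinset] at hs₂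
  have hBc : ∀ i, i ∉ A ∪ C → i ∉ Bᶜ := fun i hi => by
    have := hcover i
    simp only [Set.mem_union, Set.mem_compl_iff] at *
    tauto
  have hAc : ∀ i, i ∉ B ∪ C → i ∉ Aᶜ := fun i hi => by
    have := hcover i
    simp only [Set.mem_union, Set.mem_compl_iff] at *
    tauto
  have hnotC : ∀ i, i ∉ C → i ∉ Bᶜ ∨ i ∉ Aᶜ := fun i hi => by
    have := hcover i
    simp only [Set.mem_compl_iff] at *
    tauto
  have happly : ∀ i j, M i j = M₁ i j + M₂ i j := fun i j => by rw [hadd]; rfl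
  have hzero : ∀ i j, i ∉ C ∨ j ∉ C → M₁ i j = 0 ∨ M₂ i j = 0 := by
    rintro i j (h | h)
    · exact (hnotC i h).imp (fun h => hs₁ i j (Or.inl h)) fun h => hs₂ i j (Or.inl h)
    · exact (hnotC j h).imp (fun h => hs₁ i j (Or.inr h)) fun h => hs₂ i j (Or.inr h)
  have hpat' : ∀ i j, i ≠ j → ¬ G.Adj i j → M₁ i j = 0 ∧ M₂ i j = 0 := by
    intro i j hij hadj
    have hsum := happly i j
    rw [hpat i j hij hadj] at hsum
    have hor : i ∉ C ∨ j ∉ C := by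
      by_contra! h
      exact hadj (hclique i h.1 j h.2 hij)
    rcases hzero i j hor with h | h <;> constructor <;> linarith
  have hf₁ := hA M₁ ⟨hM₁, fun i j hij => hs₁ i j (hij.imp (hBc i) (hBc j)),
    fun i j hij hadj => (hpat' i j hij hadj).1⟩
  have hf₂ := hB M₂ ⟨hM₂, fun i j hij => hs₂ i j (hij.imp (hAc i) (hAc j)),
    fun i j hij hadj => (hpat' i j hij hadj).2⟩
  have hrest : (M.map (powExt b α) - M₁.map (powExt b α) - M₂.map (powExt b α)).PosSemidef := by
    have heq : M.map (powExt b α) - M₁.map (powExt b α) - M₂.map (powExt b α)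
        = (padTo C M₁ + padTo C M₂).map (powExt b α) - (padTo C M₁).map (powExt b α)
          - (padTo C M₂).map (powExt b α) := by
      ext i j
      by_cases hij : i ∈ C ∧ j ∈ C
      · simp [padTo, hij, happly]
      · rcases hzero i j (by tauto) with h | h <;> simp [padTo, hij, happly, h]
    rw [heq]
    rcases C.eq_empty_or_nonempty with hC | hC
    · convert PosSemidef.zero (n := V) (R := ℝ) using 1
      ext i j
      simp [padTo, hC]
    · refine posSemidef_map_add_sub C.toFinset b α ?_ (padTo_posSemidef C hM₁)
        (padTo_posSemidef C hM₂) ?_ ?_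
      · rw [← Set.ncard_eq_toFinset_card']; exact hα hC
      · rw [Set.coe_toFinset]; exact supportedOn_padTo C M₁
      · rw [Set.coe_toFinset]; exact supportedOn_padTo C M₂
  have h := (hrest.add hf₂).add hf₁
  rwa [sub_add_cancel, sub_add_cancel] at h

/-- Preserving positivity on `P_G` forces the exponent to be a positive integer of the right
parity, or at least the size of the separating clique. -/
lemma exponent_of_preserves {V : Type*} [Fintype V] {G : SimpleGraph V} {C : Set V}
    (hC : ∀ c₁ ∈ C, ∀ c₂ ∈ C, c₁ ≠ c₂ → G.Adj c₁ c₂) {v₁ v₂ : V} (hv₁ : v₁ ∉ C) (hv₂ : v₂ ∉ C)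
    (hne : v₁ ≠ v₂) (h₁ : ∀ c ∈ C, G.Adj v₁ c) (h₂ : ∀ c ∈ C, G.Adj v₂ c) (b : Bool) {α : ℝ}
    (hpres : ∀ M ∈ PsetG G univ, (M.map (powExt b α)).PosSemidef) (hlt : |α| < C.ncard) :
    ∃ d : ℕ, 0 < d ∧ α = d ∧ (-1) ^ d = paritySign b := by
  classical
  have hCne : C.Nonempty := by
    by_contra h
    rw [Set.not_nonempty_iff_eq_empty] at h
    simp only [h, Set.ncard_empty, Nat.cast_zero] at hlt
    exact absurd hlt (abs_nonneg α).not_gt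
  obtain ⟨c, hc⟩ := hCne
  have hα1 : 1 ≤ α := by
    have h := superadditive_of_preserves_embedding hC hv₁ hv₂ hne h₁ h₂ b α hpres
      (ι := Unit) ⟨fun _ => c, fun _ _ _ => rfl⟩ (fun _ => hc) 1 1 1
    simp only [Pi.one_apply, powExt_one, Finset.univ_unique, Finset.sum_const,
      Finset.card_singleton, one_smul, mul_one, one_mul, one_pow, one_add_one_eq_two,
      powExt_of_pos b α two_pos] at h
    by_contra! hlt1
    have := Real.rpow_lt_rpow_of_exponent_lt one_lt_two hlt1
    rw [Real.rpow_one] at this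
    linarith
  by_contra hno
  have hnp : ¬ ∃ p : Polynomial ℝ, ∀ x, powExt b α x = p.eval x := fun ⟨p, hp⟩ =>
    hno (exists_nat_of_powExt_eq_eval b (by linarith) p hp)
  obtain ⟨x, w, hw, hg⟩ :=
    exists_weights_annihilating_monomials ⌊α⌋₊ (powExt b α) (powExt_zero b α) hnp
  obtain ⟨t, ht, hstrict⟩ := exists_pos_not_superadditive b (Nat.lt_floor_add_one α) x w hw hg
  have hcard : Fintype.card (Fin (⌊α⌋₊ + 1)) ≤ Fintype.card C := by
    rw [Fintype.card_fin, ← Nat.card_eq_fintype_card, Nat.card_coe_set_eq]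
    rw [abs_of_pos (by linarith)] at hlt
    exact (Nat.floor_lt (by linarith)).2 hlt
  obtain ⟨e⟩ := Function.Embedding.nonempty_of_card_le hcard
  have h := superadditive_of_preserves_embedding hC hv₁ hv₂ hne h₁ h₂ b α hpres
    (e.trans (Function.Embedding.subtype _)) (fun i => (e i).2) 1 (fun i => √t * x i) w
  have hsqrt : powExt b α (√t) ^ 2 = t ^ α := by
    rw [sq, ← powExt_mul, Real.mul_self_sqrt ht.le, powExt_of_pos b α ht]
  have hfac : ∑ i, w i * (powExt b α (√t) * powExt b α (x i))
      = powExt b α (√t) * ∑ i, w i * powExt b α (x i) := by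
    rw [Finset.mul_sum]
    exact Finset.sum_congr rfl fun i _ => by ring
  have hmul : ∀ i j, √t * x i * (√t * x j) = t * (x i * x j) := fun i j => by
    rw [mul_mul_mul_comm, Real.mul_self_sqrt ht.le]
  simp only [Pi.one_apply, powExt_one, mul_one, powExt_mul b α (√t), hfac, mul_pow, hsqrt,
    hmul] at h
  linarith

/-- **Corollary 3.5**: if `(A,C,B)` is a decomposition of `G` with vertices `v₁ ∈ A`, `v₂ ∈ B`
adjacent to every vertex of `C`, and `f = ψ_α` or `f = φ_α`, then `f[−]` preserves positivity
on `P_G` if and only if either `α` is an odd (resp. even) positive integer, or `f[−]` preserves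
positivity on `P_{G_{A∪C}}` and `P_{G_{B∪C}}` and `|α| ≥ |C|`. -/
theorem decomposition_powers_iff {V : Type*} [Fintype V] (G : SimpleGraph V)
    (A C B : Set V) (hdec : IsDecomposition G A C B)
    (v₁ v₂ : V) (hv₁ : v₁ ∈ A) (hv₂ : v₂ ∈ B)
    (h₁ : ∀ c ∈ C, G.Adj v₁ c) (h₂ : ∀ c ∈ C, G.Adj v₂ c)
    (α : ℝ) (f : ℝ → ℝ) (hf : f = psiF α ∨ f = phiF α) :
    (∀ M ∈ PsetG G univ, (M.map f).PosSemidef) ↔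
      (((f = psiF α ∧ α ∈ oddNats) ∨ (f = phiF α ∧ α ∈ evenNats)) ∨
       ((∀ M ∈ PsetSub G (A ∪ C), (M.map f).PosSemidef) ∧
        (∀ M ∈ PsetSub G (B ∪ C), (M.map f).PosSemidef) ∧
        (C.ncard : ℝ) ≤ |α|)) := by
  have hdec' := hdec
  obtain ⟨-, hAC, hAB, hCB, -, hclique⟩ := hdec'
  obtain ⟨b, rfl, hparity⟩ : ∃ b, f = powExt b α ∧
      ((∃ d : ℕ, 0 < d ∧ α = d ∧ (-1) ^ d = paritySign b) →
        (f = psiF α ∧ α ∈ oddNats) ∨ (f = phiF α ∧ α ∈ evenNats)) := by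
    rcases hf with rfl | rfl
    · refine ⟨true, rfl, fun ⟨d, hd, hα, hs⟩ => Or.inl ⟨rfl, ?_⟩⟩
      rcases Nat.even_or_odd d with he | ⟨k, hk⟩
      · rw [he.neg_one_pow] at hs
        norm_num [paritySign] at hs
      · exact ⟨k + 1, k.succ_pos, by rw [hα, hk]; push_cast; ring⟩
    · refine ⟨false, rfl, fun ⟨d, hd, hα, hs⟩ => Or.inr ⟨rfl, ?_⟩⟩
      rcases Nat.even_or_odd d with ⟨k, hk⟩ | ho
      · exact ⟨k, by omega, by rw [hα, hk]; push_cast; ring⟩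
      · rw [ho.neg_one_pow] at hs
        norm_num [paritySign] at hs
  have hpowCase : ∀ c : Bool, ∀ d : ℕ, 0 < d → α = d → (-1) ^ d = paritySign c →
      ∀ M ∈ PsetG G univ, (M.map (powExt c α)).PosSemidef := by
    rintro c d hd rfl hs M ⟨hM, -⟩
    rw [show powExt c (d : ℝ) = (· ^ d) from funext (powExt_natCast c hd hs)]
    exact posSemidef_map_pow hM hd
  constructor
  · intro hpres
    by_cases hcard : (C.ncard : ℝ) ≤ |α|
    · exact Or.inr ⟨fun M hM => hpres M ⟨hM.1, by simp, hM.2.2⟩,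
        fun M hM => hpres M ⟨hM.1, by simp, hM.2.2⟩, hcard⟩
    · exact Or.inl (hparity (exponent_of_preserves hclique (hAC.notMem_of_mem_left hv₁)
        (hCB.notMem_of_mem_right hv₂) (hAB.ne_of_mem hv₁ hv₂) h₁ h₂ b hpres (not_le.1 hcard)))
  · rintro ((⟨hfb, k, hk, hα⟩ | ⟨hfb, k, hk, hα⟩) | ⟨hA, hB, hcard⟩)
    · rw [hfb]
      refine hpowCase true (2 * k - 1) (by omega) ?_ ?_
      · rw [hα, Nat.cast_sub (by omega)]; push_cast; ring
      · exact Odd.neg_one_pow ⟨k - 1, by omega⟩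
    · rw [hfb]
      refine hpowCase false (2 * k) (by omega) ?_ ?_
      · rw [hα]; push_cast; ring
      · exact Even.neg_one_pow ⟨k, by omega⟩
    · refine preserves_of_superadditive hdec b (fun ⟨c, hc⟩ => ?_) hA hB
      have hα : 0 ≤ α := nonneg_exponent_of_preserves (h₁ c hc) (Or.inl hv₁) (Or.inr hc) b hA
      rwa [abs_of_nonneg hα] at hcard
end
end
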